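/- (Sufficiency in the main theorem.) Consider the system ẋ = f(x) + g₁(x)u₁ + g₂(x)u₂ on an open set U ⊆ ℝⁿ, n ≥ 2, with f, g₁, g₂ smooth. Let (F_k), (G_k) be the Lie and derived flags of Δ = span_{C^∞(U)}{g₁, g₂}, let Λᵏ = (G_k)^⊥ and Cᵏ_q = C(Λᵏ)_q for 1 ≤ k ≤ n−3. Let p ∈ U and suppose there is an open neighborhood W ⊆ U of p such that: (1) dim F_k(q) = dim G_k(q) = 2 + k for all 0 ≤ k ≤ n−2 and all q ∈ W; and (2) (L_f ω)(q) ∈ Cᵏ_q for all 1 ≤ k ≤ n−3, all q ∈ W and all ω ∈ Λᵏ. Then there exist an open neighborhood V ⊆ U of p, a diffeomorphism φ : V → φ(V) ⊆ ℝⁿ, smooth maps α : V → ℝ² and β : V → ℝ^{2×2} with β(x) invertible for all x ∈ V, and smooth functions φ₁, …, φ_{n−2} with φᵢ depending only on the variables z₁, …, z_{i+1}, zₙ (for 1 ≤ i ≤ n−2), such that for all x ∈ V and all v ∈ ℝ²: Dφ(x)( f(x) + Σ_{i=1}^{2}(αᵢ(x) + Σ_{j=1}^{2} β_{ij}(x)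 vⱼ) gᵢ(x) ) = ( φ₁(z) + z₂v₁, φ₂(z) + z₃v₁, …, φ_{n−2}(z) + z_{n−1}v₁, v₂, v₁ ) with z = φ(x), i.e., the closed-loop system in the coordinates z = φ(x) is the triangular form (3). -/

import Mathlib

noncomputable section

/-- A vector field on (an open subset of) `ℝⁿ`, represented as a total map. -/
abbrev VF (n : ℕ) := (Fin n → ℝ) → (Fin n → ℝ)

/-- Lie bracket `[X,Y](x) = DY(x)(X(x)) − DX(x)(Y(x))`. -/
def lieBracket {n : ℕ} (X Y : VF n) : VF n :=
  fun x => fderiv ℝ Y x (X x) - fderiv ℝ X x (Y x)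

/-- Span over `C^∞(U)` of a set of vector fields (membership only constrains values on `U`). -/
def spanOn {n : ℕ} (U : Set (Fin n → ℝ)) (S : Set (VF n)) : Set (VF n) :=
  { X | ∃ (m : ℕ) (c : Fin m → (Fin n → ℝ) → ℝ) (Y : Fin m → VF n),
      (∀ i, ContDiffOn ℝ (⊤ : ℕ∞) (c i) U) ∧ (∀ i, Y i ∈ S) ∧
      ∀ x ∈ U, X x = ∑ i, c i x • Y i x }

/-- Sum of two distributions (as equality of values on `U`). -/
def addOn {n : ℕ} (U : Set (Fin n → ℝ)) (A B : Set (VF n)) : Set (VF n) :=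
  { X | ∃ Y ∈ A, ∃ Z ∈ B, ∀ x ∈ U, X x = Y x + Z x }

/-- The set of brackets `[X,Y]`, `X ∈ A`, `Y ∈ B`. -/
def bracketSet {n : ℕ} (A B : Set (VF n)) : Set (VF n) :=
  { Z | ∃ X ∈ A, ∃ Y ∈ B, Z = lieBracket X Y }

/-- The Lie flag: `F₀ = Δ`, `F_{k+1} = F_k + span_{C^∞(U)}{[X,Y] : X ∈ F_k, Y ∈ F₀}`. -/
def lieFlag {n : ℕ} (U : Set (Fin n → ℝ)) (Δ : Set (VF n)) : ℕ → Set (VF n)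
  | 0 => Δ
  | k + 1 => addOn U (lieFlag U Δ k) (spanOn U (bracketSet (lieFlag U Δ k) Δ))

/-- The derived flag: `G₀ = Δ`, `G_{k+1} = G_k + span_{C^∞(U)}{[X,Y] : X, Y ∈ G_k}`. -/
def derivedFlag {n : ℕ} (U : Set (Fin n → ℝ)) (Δ : Set (VF n)) : ℕ → Set (VF n)
  | 0 => Δ
  | k + 1 => addOn U (derivedFlag U Δ k)
      (spanOn U (bracketSet (derivedFlag U Δ k) (derivedFlag U Δ k)))

end

noncomputable section

/-- Covectors on `ℝⁿ`. -/
abbrev Covector (n : ℕ) := (Fin n → ℝ) →L[ℝ] ℝ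

/-- A 1-form on (an open subset of) `ℝⁿ`, represented as a total map. -/
abbrev OneForm (n : ℕ) := (Fin n → ℝ) → Covector n

/-- The interior product `ι_v dω(q)`, i.e. the covector
`w ↦ dω(q)(v,w) = (Dω(q)(v))(w) − (Dω(q)(w))(v)`. -/
def intExtDer {n : ℕ} (ω : OneForm n) (q v : Fin n → ℝ) : Covector n :=
  fderiv ℝ ω q v - (fderiv ℝ ω q).flip v

/-- The Lie derivative of a 1-form along a vector field:
`(L_X ω)(q)(v) = (Dω(q)(X(q)))(v) + ω(q)(DX(q)(v))`. -/
def lieDerOneForm {n : ℕ} (X : VF n) (ω : OneForm n) (q : Fin n → ℝ) : Covector n :=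
  fderiv ℝ ω q (X q) + (ω q).comp (fderiv ℝ X q)

/-- The annihilator `A^⊥` of a set `A` of vector fields: the smooth 1-forms `ω` on `U`
with `ω(x)(X(x)) = 0` for all `X ∈ A`, `x ∈ U`. -/
def annihilatorOn {n : ℕ} (U : Set (Fin n → ℝ)) (A : Set (VF n)) : Set (OneForm n) :=
  { ω | ContDiffOn ℝ (⊤ : ℕ∞) ω U ∧ ∀ X ∈ A, ∀ x ∈ U, ω x (X x) = 0 }

/-- The associated (Cauchy characteristic) space of a codistribution `Λ` at `q`. -/
def assocOf {n : ℕ} (Λ : Set (OneForm n)) (q : Fin n → ℝ) : Set (Fin n → ℝ) :=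
  { v | ∀ ω ∈ Λ, ω q v = 0 ∧
      intExtDer ω q v ∈ Submodule.span ℝ { ξ : Covector n | ∃ ρ ∈ Λ, ξ = ρ q } }

/-- The retracting space `C(Λ)_q`, the annihilator of the associated space. -/
def retractOf {n : ℕ} (Λ : Set (OneForm n)) (q : Fin n → ℝ) : Set (Covector n) :=
  { ξ | ∀ v ∈ assocOf Λ q, ξ v = 0 }

/-- `dim Δ(q)`: the dimension of `Δ_q = {X(q) : X ∈ Δ} ⊆ ℝⁿ`. -/
def evalDim {n : ℕ} (A : Set (VF n)) (q : Fin n → ℝ) : ℕ :=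
  Module.finrank ℝ ↥(Submodule.span ℝ { w : Fin n → ℝ | ∃ X ∈ A, w = X q })

/-- The right-hand side of the triangular form (3), with 0-based components:
component `j ≤ n−3` is `φ_{j+1}(z) + z_{j+2} v₁` (1-based), component `n−2` is `v₂` and
component `n−1` is `v₁`.  Here `Φ i` is the 1-based function `φ_{i+1}`. -/
def triRHS (n : ℕ) (Φ : ℕ → (Fin n → ℝ) → ℝ) (z : Fin n → ℝ) (v : Fin 2 → ℝ) :
    Fin n → ℝ :=
  fun j => if h : j.1 + 3 ≤ n then Φ j.1 z + z ⟨j.1 + 1, by omega⟩ * v 0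
           else if j.1 + 2 = n then v 1 else v 0

/-- The system `ẋ = f + g₁u₁ + g₂u₂` is transformable into the triangular form (3)
near `p`: on an open neighborhood `V ⊆ U` of `p` there are a diffeomorphism `φ` onto
`φ(V)` and a regular static state feedback `u = α + βv` such that the closed-loop
vector field is pushed forward by `φ` to the triangular form, where each `φᵢ = Φ (i-1)`
depends only on `z₁, …, z_{i+1}, zₙ`. -/
def IsTriangularizableAt (n : ℕ) (U : Set (Fin n → ℝ)) (f g1 g2 : VF n)
    (p : Fin n → ℝ) : Prop :=
  ∃ V : Set (Fin n → ℝ), IsOpen V ∧ p ∈ V ∧ V ⊆ U ∧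
    ∃ φ ψ : (Fin n → ℝ) → (Fin n → ℝ),
      ContDiffOn ℝ (⊤ : ℕ∞) φ V ∧ IsOpen (φ '' V) ∧ ContDiffOn ℝ (⊤ : ℕ∞) ψ (φ '' V) ∧
      (∀ x ∈ V, ψ (φ x) = x) ∧
      ∃ (α : (Fin n → ℝ) → Fin 2 → ℝ) (β : (Fin n → ℝ) → Fin 2 → Fin 2 → ℝ),
        (∀ i, ContDiffOn ℝ (⊤ : ℕ∞) (fun x => α x i) V) ∧
        (∀ i j, ContDiffOn ℝ (⊤ : ℕ∞) (fun x => β x i j) V) ∧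
        (∀ x ∈ V, β x 0 0 * β x 1 1 - β x 0 1 * β x 1 0 ≠ 0) ∧
        ∃ Φ : ℕ → (Fin n → ℝ) → ℝ,
          (∀ i, i + 3 ≤ n → ContDiffOn ℝ (⊤ : ℕ∞) (Φ i) (φ '' V)) ∧
          (∀ i, i + 3 ≤ n → ∀ z z' : Fin n → ℝ,
            (∀ j : Fin n, (j.1 ≤ i + 1 ∨ j.1 + 1 = n) → z j = z' j) → Φ i z = Φ i z') ∧
          ∀ x ∈ V, ∀ v : Fin 2 → ℝ,
            fderiv ℝ φ x (f x
                + (α x 0 + β x 0 0 * v 0 + β x 0 1 * v 1) • g1 x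
                + (α x 1 + β x 1 0 * v 0 + β x 1 1 * v 1) • g2 x) =
              triRHS n Φ (φ x) v

/-- Conditions 1) and 2) of the main theorem on the set `W`:
1) `dim F_k(q) = dim G_k(q) = 2 + k` for `0 ≤ k ≤ n−2`, `q ∈ W`;
2) `(L_f ω)(q) ∈ Cᵏ_q` for `1 ≤ k ≤ n−3`, `q ∈ W`, `ω ∈ Λᵏ = (G_k)^⊥`. -/
def MainConditionsOn (n : ℕ) (U W : Set (Fin n → ℝ)) (f g1 g2 : VF n) : Prop :=
  (∀ k : ℕ, k + 2 ≤ n → ∀ q ∈ W,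
      evalDim (lieFlag U (spanOn U {g1, g2}) k) q = 2 + k ∧
      evalDim (derivedFlag U (spanOn U {g1, g2}) k) q = 2 + k) ∧
  (∀ k : ℕ, 1 ≤ k → k + 3 ≤ n → ∀ q ∈ W,
      ∀ ω ∈ annihilatorOn U (derivedFlag U (spanOn U {g1, g2}) k),
        lieDerOneForm f ω q ∈
          retractOf (annihilatorOn U (derivedFlag U (spanOn U {g1, g2}) k)) q)

end

/-!
The last proper member `G_{n-3}` of the derived flag of `Δ` is the kernel of a 1-form `η`. The rank
conditions make `η` of class three, so that by Frobenius' theorem (obtained from the smooth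
dependence of solutions of ODEs on parameters, with the implicit function theorem in a space of
curves) it has a Darboux normal form: up to a nonvanishing factor, `η = dz₀ - z₁ dh`.
For `Y ∈ Δ` with `Y h ≠ 0` the functions `z_{m+1} = Y z_m / Y h` then generate a tower of contact
forms `η_m = dz_m - z_{m+1} dh`, where `η_0, …, η_m` span the annihilator of `G_{n-3-m}`, and
`(z₀, …, z_{n-2}, h)` are coordinates. In these, the `g_i`-directions satisfy
`dz_m = z_{m+1} dh`, which is the chained form.
Condition (2) says through Cartan's formula that `d(η_i(f))` is a combination of
`dz₀, …, dz_{i+1}, dh`, so the drift `η_i(f)` depends on `z₀, …, z_{i+1}, h` only. The feedback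
solves `dh(ẋ) = v₁`, `dz_{n-2}(ẋ) = v₂`, which determines the inputs because `dh` and `dz_{n-2}` are
independent on `Δ`.
-/

/-! ### Superposition operators and the smooth inverse function theorem -/

section Superposition

open scoped ContDiff Topology

universe u

variable {T : Type*} [TopologicalSpace T] [CompactSpace T]
  {X Y : Type u} [NormedAddCommGroup X] [NormedSpace ℝ X] [NormedAddCommGroup Y] [NormedSpace ℝ Y]

variable (T X Y) in
/-- Pointwise application `(A, η) ↦ (t ↦ A t (η t))` of a continuous family of linear maps,
bundled so that its operator norm is at most one. -/
noncomputable def pointwiseApply : C(T, X →L[ℝ] Y) →L[ℝ] C(T, X) →L[ℝ] C(T, Y) :=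
  LinearMap.mkContinuous₂
    (LinearMap.mk₂ ℝ (fun (A : C(T, X →L[ℝ] Y)) (η : C(T, X)) =>
        (⟨fun t => A t (η t), A.continuous.clm_apply η.continuous⟩ : C(T, Y)))
      (by intros; ext; simp) (by intros; ext; simp) (by intros; ext; simp)
      (by intros; ext; simp)) 1 fun A η => by
    rw [one_mul, ContinuousMap.norm_le _ (by positivity)]
    exact fun t => ((A t).le_opNorm (η t)).trans <|
      mul_le_mul (A.norm_coe_le_norm t) (η.norm_coe_le_norm t) (by positivity) (by positivity)

lemma exists_norm_sub_sub_fderiv_le_of_isCompact {K : Set X} (hK : IsCompact K) {v : X → Y}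
    {v' : X → X →L[ℝ] Y} (hv : ∀ x, HasFDerivAt v (v' x) x) (hv' : Continuous v')
    {ε : ℝ} (hε : 0 < ε) :
    ∃ δ > 0, ∀ x ∈ K, ∀ y, ‖y - x‖ < δ → ‖v y - v x - v' x (y - x)‖ ≤ ε * ‖y - x‖ := by
  obtain ⟨δ, hδ, hunif⟩ := Metric.mem_uniformity_dist.1 <|
    hK.uniformContinuousAt_of_continuousAt v' (fun x _ => hv'.continuousAt)
      (Metric.dist_mem_uniformity hε)
  refine ⟨δ, hδ, fun x hx y hxy => ?_⟩
  refine (convex_segment x y).norm_image_sub_le_of_norm_hasFDerivWithin_le'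
    (fun z _ => (hv z).hasFDerivWithinAt) (fun z hz => ?_)
    (left_mem_segment ℝ x y) (right_mem_segment ℝ x y)
  have hz' : dist x z < δ := by
    rw [dist_comm, dist_eq_norm]
    exact (norm_sub_le_of_mem_segment hz).trans_lt hxy
  rw [← dist_eq_norm, dist_comm]
  exact (hunif hz' hx).le

lemma hasFDerivAt_continuousMap_comp {v : C(X, Y)} {v' : C(X, X →L[ℝ] Y)}
    (hv : ∀ x, HasFDerivAt v (v' x) x) (γ₀ : C(T, X)) :
    HasFDerivAt (fun γ : C(T, X) => v.comp γ) (pointwiseApply T X Y (v'.comp γ₀)) γ₀ := by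
  rw [hasFDerivAt_iff_isLittleO, Asymptotics.isLittleO_iff]
  intro ε hε
  obtain ⟨δ, hδ, hrem⟩ := exists_norm_sub_sub_fderiv_le_of_isCompact
    (isCompact_range γ₀.continuous) hv v'.continuous hε
  filter_upwards [Metric.ball_mem_nhds γ₀ hδ] with γ hγ
  rw [ContinuousMap.norm_le _ (by positivity)]
  intro t
  have hclose : ‖γ t - γ₀ t‖ ≤ ‖γ - γ₀‖ := (γ - γ₀).norm_coe_le_norm t
  calc ‖v (γ t) - v (γ₀ t) - v' (γ₀ t) (γ t - γ₀ t)‖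
      ≤ ε * ‖γ t - γ₀ t‖ :=
        hrem _ (Set.mem_range_self t) _ (hclose.trans_lt (mem_ball_iff_norm.1 hγ))
    _ ≤ ε * ‖γ - γ₀‖ := by gcongr

lemma contDiff_nat_continuousMap_comp (k : ℕ) {v : C(X, Y)} (hv : ContDiff ℝ k v) :
    ContDiff ℝ k (fun γ : C(T, X) => v.comp γ) := by
  induction k generalizing Y with
  | zero => exact contDiff_zero.2 (ContinuousMap.continuous_postcomp _)
  | succ k ih =>
    rw [Nat.cast_succ] at hv ⊢
    rw [contDiff_succ_iff_hasFDerivAt] at hv ⊢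
    obtain ⟨v', hv'_smooth, hv'⟩ := hv
    have hcomp := ih (v := ⟨v', hv'_smooth.continuous⟩) hv'_smooth
    exact ⟨_, (pointwiseApply T X Y).contDiff.comp hcomp, hasFDerivAt_continuousMap_comp hv'⟩

lemma contDiff_continuousMap_comp {v : C(X, Y)} (hv : ContDiff ℝ ∞ v) :
    ContDiff ℝ ∞ (fun γ : C(T, X) => v.comp γ) :=
  contDiff_infty.2 fun k => contDiff_nat_continuousMap_comp k (contDiff_infty.1 hv k)

end Superposition

section InverseFunction

open scoped ContDiff Topology

variable {E F : Type*} [NormedAddCommGroup E] [NormedSpace ℝ E]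
  [NormedAddCommGroup F] [NormedSpace ℝ F]

lemma differentiableAt_of_contDiffOn_isOpen {f : E → F} {N : Set E} (hf : ContDiffOn ℝ ∞ f N)
    (hN : IsOpen N) {x : E} (hx : x ∈ N) : DifferentiableAt ℝ f x :=
  (hf.contDiffAt (hN.mem_nhds hx)).differentiableAt (by simp)

lemma exists_openPartialHomeomorph_contDiffOn_symm [CompleteSpace E] {f : E → F} {N : Set E}
    (hN : IsOpen N) (hf : ContDiffOn ℝ ∞ f N) {x : E} (hx : x ∈ N) {f' : E ≃L[ℝ] F}
    (hf' : HasFDerivAt f (f' : E →L[ℝ] F) x) :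
    ∃ e : OpenPartialHomeomorph E F, x ∈ e.source ∧ e.source ⊆ N ∧ ⇑e = f ∧
      ContDiffOn ℝ ∞ e.symm e.target := by
  have hfx : ContDiffAt ℝ ∞ f x := hf.contDiffAt (hN.mem_nhds hx)
  have hopen : IsOpen (N ∩ fderiv ℝ f ⁻¹' Set.range ((↑) : (E ≃L[ℝ] F) → E →L[ℝ] F)) :=
    (hf.continuousOn_fderiv_of_isOpen hN (by simp)).isOpen_inter_preimage hN
      ContinuousLinearEquiv.isOpen
  let e := (hfx.toOpenPartialHomeomorph f hf' (by simp)).restrOpen _ hopen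
  have he : ⇑e = f := hfx.toOpenPartialHomeomorph_coe hf' (by simp)
  refine ⟨e, ⟨hfx.mem_toOpenPartialHomeomorph_source hf' (by simp), hx, f', hf'.fderiv.symm⟩,
    fun y hy => hy.2.1, he, fun z hz => ?_⟩
  obtain ⟨-, hzN, g, hg⟩ := e.map_target hz
  refine (e.contDiffAt_symm (f₀' := g) hz ?_ ?_).contDiffWithinAt
  · rw [he, hg]
    exact (differentiableAt_of_contDiffOn_isOpen hf hN hzN).hasFDerivAt
  · rw [he]
    exact hf.contDiffAt (hN.mem_nhds hzN)

end InverseFunction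

/-! ### Smooth solutions of radial differential equations -/

section RadialODE

open scoped ContDiff Topology unitInterval

universe u

variable {K F : Type u} [NormedAddCommGroup K] [NormedSpace ℝ K]
  [NormedAddCommGroup F] [NormedSpace ℝ F]

variable (F) in
/-- The Volterra integration operator `η ↦ (t ↦ ∫₀ᵗ η)` on paths parametrized by `[0, 1]`.
Integration over `ℝ` forces the extension of `η` by constants. -/
noncomputable def volterra : C(I, F) →L[ℝ] C(I, F) :=
  have hext (η : C(I, F)) : Continuous (Set.IccExtend zero_le_one η) := η.continuous.Icc_extend'
  LinearMap.mkContinuous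
    { toFun := fun η => ⟨fun t => ∫ u in (0 : ℝ)..t, Set.IccExtend zero_le_one η u,
        (intervalIntegral.continuous_primitive
          (fun a b => (hext η).intervalIntegrable a b) 0).comp continuous_subtype_val⟩
      map_add' := fun η ξ => by
        ext t
        exact intervalIntegral.integral_add ((hext η).intervalIntegrable _ _)
          ((hext ξ).intervalIntegrable _ _)
      map_smul' := fun c η => by
        ext t
        exact intervalIntegral.integral_smul c _ } 1 fun η => by
    rw [one_mul, ContinuousMap.norm_le _ (by positivity)]
    intro t
    calc ‖∫ u in (0 : ℝ)..t, Set.IccExtend zero_le_one η u‖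
        ≤ ‖η‖ * |(t : ℝ) - 0| :=
          intervalIntegral.norm_integral_le_of_norm_le_const fun u _ => η.norm_coe_le_norm _
      _ ≤ ‖η‖ := by
          rw [sub_zero, abs_of_nonneg t.2.1]
          exact mul_le_of_le_one_right (norm_nonneg _) t.2.2

variable (F) in
/-- The inclusion of `F` into `C([0, 1], F)` as constant paths. -/
noncomputable def constPath : F →L[ℝ] C(I, F) :=
  LinearMap.mkContinuous
    { toFun := ContinuousMap.const I
      map_add' := fun _ _ => rfl
      map_smul' := fun _ _ => rfl } 1 fun x => by
    rw [one_mul, ContinuousMap.norm_le _ (norm_nonneg _)]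
    exact fun _ => le_rfl

variable (K F) in
/-- The map sending `(s, γ)` to the path `u ↦ (u s, s, γ u)`, along which the radial equation is
evaluated. -/
noncomputable def radialPath : K × C(I, F) →L[ℝ] C(I, K × K × F) :=
  LinearMap.mkContinuous
    { toFun := fun x => ⟨fun u => ((u : ℝ) • x.1, x.1, x.2 u), by fun_prop⟩
      map_add' := fun x y => by ext u <;> simp
      map_smul' := fun c x => by ext u <;> simp [smul_comm c] } 1 fun x => by
    rw [one_mul, ContinuousMap.norm_le _ (norm_nonneg _)]
    intro u
    have hfst : ‖(u : ℝ) • x.1‖ ≤ ‖x‖ := by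
      rw [norm_smul, Real.norm_eq_abs, abs_of_nonneg u.2.1]
      exact (mul_le_of_le_one_left (norm_nonneg _) u.2.2).trans (norm_fst_le x)
    exact norm_prod_le_iff.2 ⟨hfst, norm_prod_le_iff.2
      ⟨norm_fst_le x, (x.2.norm_coe_le_norm u).trans (norm_snd_le x)⟩⟩

/-- The right-hand side `a (x, y) s` of the radial equation `γ' u = a (u s, γ u) s`, as a function
of `(x, s, y)`. -/
noncomputable def radialField (a : C(K × F, K →L[ℝ] F)) : C(K × K × F, F) :=
  ⟨fun x => a (x.1, x.2.2) x.2.1, by fun_prop⟩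

lemma contDiff_radialField {a : C(K × F, K →L[ℝ] F)} (ha : ContDiff ℝ ∞ a) :
    ContDiff ℝ ∞ (radialField a) :=
  (ha.comp (by fun_prop : ContDiff ℝ ∞ fun x : K × K × F => (x.1, x.2.2))).clm_apply
    (by fun_prop)

lemma fderiv_radialField_zero {a : C(K × F, K →L[ℝ] F)} (ha : ContDiff ℝ ∞ a) (ha0 : a 0 = 0) :
    fderiv ℝ (radialField a) 0 = 0 := by
  have hproj : ContDiff ℝ ∞ fun x : K × K × F => (x.1, x.2.2) := by fun_prop
  have hcoef : DifferentiableAt ℝ (fun x : K × K × F => a (x.1, x.2.2)) 0 :=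
    (ha.comp hproj).differentiable (by simp) 0
  have hvec := (hasFDerivAt_snd (𝕜 := ℝ) (p := (0 : K × K × F))).fst
  refine (hcoef.hasFDerivAt.clm_apply hvec).fderiv.trans ?_
  have ha0' : a ((0 : K), (0 : F)) = 0 := ha0
  ext x <;> simp [ha0']

/-- The defect of `(s, γ)` in the integral form of the radial equation: its second component is
the constant `t` iff `γ u = t + ∫₀ᵘ a (r s, γ r) s dr`. -/
noncomputable def radialDefect (a : C(K × F, K →L[ℝ] F)) (x : K × C(I, F)) : K × C(I, F) :=
  (x.1, x.2 - volterra F ((radialField a).comp (radialPath K F x)))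

lemma contDiff_radialDefect {a : C(K × F, K →L[ℝ] F)} (ha : ContDiff ℝ ∞ a) :
    ContDiff ℝ ∞ (radialDefect a) :=
  contDiff_fst.prodMk <| contDiff_snd.sub <| (volterra F).contDiff.comp <|
    (contDiff_continuousMap_comp (contDiff_radialField ha)).comp (radialPath K F).contDiff

lemma radialDefect_zero (a : C(K × F, K →L[ℝ] F)) : radialDefect a 0 = 0 := by
  have hpath : (radialField a).comp (radialPath K F 0) = 0 := by
    ext u
    simp [radialField]
  rw [radialDefect, hpath, map_zero, sub_zero]

lemma hasFDerivAt_radialDefect_zero {a : C(K × F, K →L[ℝ] F)} (ha : ContDiff ℝ ∞ a)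
    (ha0 : a 0 = 0) :
    HasFDerivAt (radialDefect a) (ContinuousLinearMap.id ℝ (K × C(I, F))) 0 := by
  have hb := contDiff_radialField ha
  let b' : C(K × K × F, (K × K × F) →L[ℝ] F) := ⟨fderiv ℝ (radialField a),
    hb.continuous_fderiv (by simp)⟩
  have hcomp := hasFDerivAt_continuousMap_comp (v' := b')
    (fun x => (hb.differentiable (by simp) x).hasFDerivAt) (radialPath K F 0)
  have hb'0 : b'.comp (radialPath K F 0) = 0 := by
    ext1 u
    simp [b', fderiv_radialField_zero ha ha0]
  rw [hb'0, map_zero] at hcomp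
  have hinteg := (volterra F).hasFDerivAt.comp (0 : K × C(I, F))
    (hcomp.comp (0 : K × C(I, F)) (radialPath K F).hasFDerivAt)
  refine (hasFDerivAt_fst.prodMk (hasFDerivAt_snd.sub hinteg)).congr_fderiv ?_
  ext x <;> simp

lemma radialDefect_eq_iff {a : C(K × F, K →L[ℝ] F)} {s : K} {γ : C(I, F)} {t : F} :
    radialDefect a (s, γ) = (s, constPath F t) ↔
      ∀ τ : I, γ τ = t + ∫ u in (0 : ℝ)..τ, a (u • s, Set.IccExtend zero_le_one γ u) s := by
  have hinteg (τ : I) : volterra F ((radialField a).comp (radialPath K F (s, γ))) τ =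
      ∫ u in (0 : ℝ)..τ, a (u • s, Set.IccExtend zero_le_one γ u) s := by
    refine intervalIntegral.integral_congr fun u hu => ?_
    rw [Set.uIcc_of_le τ.2.1] at hu
    have hu' : u ∈ Set.Icc (0 : ℝ) 1 := ⟨hu.1, hu.2.trans τ.2.2⟩
    simp only [Set.IccExtend_of_mem _ _ hu']
    rfl
  simp only [radialDefect, Prod.mk.injEq, true_and, ContinuousMap.ext_iff]
  refine forall_congr' fun τ => ?_
  rw [ContinuousMap.sub_apply, hinteg τ, sub_eq_iff_eq_add]
  rfl

/-- The path `u ↦ γ (τ u)`. A solution for the direction `s` is rescaled in this way to one for the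
direction `τ s`. -/
def rescaledPath {G : Type*} [TopologicalSpace G] (τ : I) (γ : C(I, G)) : C(I, G) :=
  ⟨fun u => γ (τ * u), by fun_prop⟩

lemma norm_smul_rescaledPath_le {G : Type*} [NormedAddCommGroup G] (τ : I) (s : K) (γ : C(I, G)) :
    ‖((τ : ℝ) • s, rescaledPath τ γ)‖ ≤ ‖(s, γ)‖ := by
  refine norm_prod_le_iff.2 ⟨?_, ?_⟩
  · rw [norm_smul, Real.norm_eq_abs, abs_of_nonneg τ.2.1]
    exact (mul_le_of_le_one_left (norm_nonneg _) τ.2.2).trans (norm_fst_le (s, γ))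
  · refine le_trans ?_ (norm_snd_le (s, γ))
    rw [ContinuousMap.norm_le _ (norm_nonneg _)]
    exact fun u => γ.norm_coe_le_norm _

lemma radialDefect_rescaledPath {a : C(K × F, K →L[ℝ] F)} {s : K} {γ : C(I, F)} {t : F}
    (hγ : radialDefect a (s, γ) = (s, constPath F t)) (τ : I) :
    radialDefect a ((τ : ℝ) • s, rescaledPath τ γ) = ((τ : ℝ) • s, constPath F t) := by
  rw [radialDefect_eq_iff] at hγ ⊢
  intro w
  have hsubst := intervalIntegral.smul_integral_comp_mul_left (a := 0) (b := (w : ℝ))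
    (fun u => a (u • s, Set.IccExtend zero_le_one γ u) s) (τ : ℝ)
  rw [mul_zero] at hsubst
  change γ (τ * w) = _
  rw [hγ (τ * w), Set.Icc.coe_mul, ← hsubst, ← intervalIntegral.integral_smul]
  congr 1
  refine intervalIntegral.integral_congr fun u hu => ?_
  rw [Set.uIcc_of_le w.2.1] at hu
  have hu' : u ∈ Set.Icc (0 : ℝ) 1 := ⟨hu.1, hu.2.trans w.2.2⟩
  have hpath : Set.IccExtend zero_le_one (rescaledPath τ γ) u =
      Set.IccExtend zero_le_one γ (τ * u) := by
    rw [Set.IccExtend_of_mem _ _ hu', Set.IccExtend_of_mem _ _ (unitInterval.mul_mem τ.2 hu')]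
    rfl
  simp only [hpath, map_smul, smul_smul, mul_comm u]

lemma exists_contDiffOn_radialDefect_eq [CompleteSpace K] [CompleteSpace F]
    {a : C(K × F, K →L[ℝ] F)} (ha : ContDiff ℝ ∞ a) (ha0 : a 0 = 0) :
    ∃ δ > 0, ∃ γ : K × F → C(I, F), ContDiffOn ℝ ∞ γ (Metric.ball 0 δ) ∧
      ∀ x ∈ Metric.ball (0 : K × F) δ, radialDefect a (x.1, γ x) = (x.1, constPath F x.2) ∧
        ∀ τ : I, γ ((τ : ℝ) • x.1, x.2) = rescaledPath τ (γ x) := by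
  obtain ⟨e, he0, -, hee, hes⟩ := exists_openPartialHomeomorph_contDiffOn_symm
    (f' := ContinuousLinearEquiv.refl ℝ (K × C(I, F))) isOpen_univ
    (contDiff_radialDefect ha).contDiffOn (Set.mem_univ 0) (hasFDerivAt_radialDefect_zero ha ha0)
  obtain ⟨r, hr, hrs⟩ := Metric.isOpen_iff.1 e.open_source 0 he0
  let ι : K × F → K × C(I, F) := fun x => (x.1, constPath F x.2)
  have hι : ContDiff ℝ ∞ ι := contDiff_fst.prodMk ((constPath F).contDiff.comp contDiff_snd)
  have he00 : e 0 = 0 := by rw [hee, radialDefect_zero]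
  have hι0 : ι 0 = e 0 := by simp [ι, he00]
  have hmem0 : (0 : K × F) ∈ ι ⁻¹' (e.target ∩ e.symm ⁻¹' Metric.ball 0 r) := by
    rw [Set.mem_preimage, hι0]
    exact ⟨e.map_source he0, by simpa [e.left_inv he0] using hr⟩
  obtain ⟨δ, hδ, hδs⟩ := Metric.isOpen_iff.1
    ((e.isOpen_inter_preimage_symm Metric.isOpen_ball).preimage hι.continuous) 0 hmem0
  refine ⟨δ, hδ, fun x => (e.symm (ι x)).2,
    contDiff_snd.comp_contDiffOn (hes.comp hι.contDiffOn fun x hx => (hδs hx).1), ?_⟩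
  intro x hx
  have hdefect : radialDefect a (e.symm (ι x)) = ι x := by
    rw [← hee, e.right_inv (hδs hx).1]
  have hfst : (e.symm (ι x)).1 = x.1 := congrArg Prod.fst hdefect
  have hpair : e.symm (ι x) = (x.1, (e.symm (ι x)).2) := Prod.ext hfst rfl
  rw [hpair] at hdefect
  refine ⟨hdefect, fun τ => ?_⟩
  have hsource : ((τ : ℝ) • x.1, rescaledPath τ (e.symm (ι x)).2) ∈ e.source := by
    refine hrs (mem_ball_zero_iff.2 ((norm_smul_rescaledPath_le τ _ _).trans_lt ?_))
    rw [← hpair]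
    exact mem_ball_zero_iff.1 (hδs hx).2
  have hscaled : ι ((τ : ℝ) • x.1, x.2) = e ((τ : ℝ) • x.1, rescaledPath τ (e.symm (ι x)).2) := by
    rw [hee]
    exact (radialDefect_rescaledPath hdefect τ).symm
  simp only [hscaled, e.left_inv hsource]

lemma exists_contDiffOn_radial_integral_eq [CompleteSpace K] [CompleteSpace F]
    {a : C(K × F, K →L[ℝ] F)} (ha : ContDiff ℝ ∞ a) (ha0 : a 0 = 0) :
    ∃ δ > 0, ∃ β : K × F → F, ContDiffOn ℝ ∞ β (Metric.ball 0 δ) ∧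
      ∀ x ∈ Metric.ball (0 : K × F) δ, ∀ τ ∈ Set.Icc (0 : ℝ) 1,
        β (τ • x.1, x.2) = x.2 + ∫ u in (0 : ℝ)..τ, a (u • x.1, β (u • x.1, x.2)) x.1 := by
  obtain ⟨δ, hδ, γ, hγ_smooth, hγ⟩ := exists_contDiffOn_radialDefect_eq ha ha0
  refine ⟨δ, hδ, fun x => γ x 1,
    (ContinuousMap.evalCLM (M := F) ℝ (1 : I)).contDiff.comp_contDiffOn hγ_smooth, ?_⟩
  intro x hx τ hτ
  have hval : ∀ u (hu : u ∈ Set.Icc (0 : ℝ) 1), γ (u • x.1, x.2) 1 = γ x ⟨u, hu⟩ := by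
    intro u hu
    rw [(hγ x hx).2 ⟨u, hu⟩]
    exact congrArg (γ x) (mul_one _)
  beta_reduce
  rw [hval τ hτ, radialDefect_eq_iff.1 (hγ x hx).1]
  congr 1
  refine intervalIntegral.integral_congr fun u hu => ?_
  rw [Set.uIcc_of_le hτ.1] at hu
  have hu' : u ∈ Set.Icc (0 : ℝ) 1 := ⟨hu.1, hu.2.trans hτ.2⟩
  simp only [hval u hu', Set.IccExtend_of_mem _ _ hu']

end RadialODE

/-! ### The Frobenius theorem -/

section RadialSolution

open scoped ContDiff Topology

variable {K F : Type*} [NormedAddCommGroup K] [NormedSpace ℝ K]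
  [NormedAddCommGroup F] [NormedSpace ℝ F]

/-- Integrability at `x` of the total differential equation `D_w y = a (s, y) w`: the second
derivatives of a solution through `x` prescribed by the equation are symmetric. -/
def IntegrableSlopeAt (a : K × F → K →L[ℝ] F) (x : K × F) : Prop :=
  ∀ w w', fderiv ℝ a x (w, a x w) w' = fderiv ℝ a x (w', a x w') w

/-- `β` is a smooth family `s ↦ β (s, t)`, on a domain that is star-shaped in `s`, of functions
solving the total differential equation `D_w y = a (s, y) w` in the radial direction `w = s`. -/
structure IsRadialSolution (a : K × F → K →L[ℝ] F) (β : K × F → F) (B : Set (K × F)) : Prop where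
  isOpen : IsOpen B
  contDiffOn : ContDiffOn ℝ ∞ β B
  smul_mem : ∀ x ∈ B, ∀ τ ∈ Set.Icc (0 : ℝ) 1, (τ • x.1, x.2) ∈ B
  contDiffAt_slope : ∀ x ∈ B, ContDiffAt ℝ ∞ a (x.1, β x)
  fderiv_radial : ∀ x ∈ B, fderiv ℝ β x (x.1, 0) = a (x.1, β x) x.1

/-- The failure of `β` to solve `D_w y = a (s, y) w` in the direction `w`. -/
noncomputable def slopeResidual (a : K × F → K →L[ℝ] F) (β : K × F → F) (w : K) (x : K × F) : F :=
  fderiv ℝ β x (w, 0) - a (x.1, β x) w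

namespace IsRadialSolution

variable {a : K × F → K →L[ℝ] F} {β : K × F → F} {B : Set (K × F)} {x : K × F}

lemma hasFDerivAt (h : IsRadialSolution a β B) (hx : x ∈ B) : HasFDerivAt β (fderiv ℝ β x) x :=
  (differentiableAt_of_contDiffOn_isOpen h.contDiffOn h.isOpen hx).hasFDerivAt

lemma hasFDerivAt_fderiv (h : IsRadialSolution a β B) (hx : x ∈ B) :
    HasFDerivAt (fderiv ℝ β) (fderiv ℝ (fderiv ℝ β) x) x :=
  (differentiableAt_of_contDiffOn_isOpen (h.contDiffOn.fderiv_of_isOpen h.isOpen (by simp))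
    h.isOpen hx).hasFDerivAt

lemma hasFDerivAt_slope (h : IsRadialSolution a β B) (hx : x ∈ B) :
    HasFDerivAt (fun y : K × F => a (y.1, β y)) ((fderiv ℝ a (x.1, β x)).comp
      ((ContinuousLinearMap.fst ℝ K F).prod (fderiv ℝ β x))) x :=
  ((h.contDiffAt_slope x hx).differentiableAt (by simp)).hasFDerivAt.comp x
    (hasFDerivAt_fst.prodMk (h.hasFDerivAt hx))

lemma fderiv_fderiv_radial (h : IsRadialSolution a β B) (hx : x ∈ B) (w : K) :
    fderiv ℝ (fderiv ℝ β) x (w, 0) (x.1, 0) =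
      fderiv ℝ a (x.1, β x) (w, fderiv ℝ β x (w, 0)) x.1 - slopeResidual a β w x := by
  have hradial : HasFDerivAt (fun y : K × F => (y.1, (0 : F)))
      ((ContinuousLinearMap.fst ℝ K F).prod 0) x :=
    hasFDerivAt_fst.prodMk (hasFDerivAt_const _ _)
  have heq : (fun y : K × F => fderiv ℝ β y (y.1, 0)) =ᶠ[𝓝 x] fun y => a (y.1, β y) y.1 :=
    Filter.eventually_of_mem (h.isOpen.mem_nhds hx) h.fderiv_radial
  have hderiv := ((h.hasFDerivAt_fderiv hx).clm_apply hradial).unique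
    (((h.hasFDerivAt_slope hx).clm_apply hasFDerivAt_fst).congr_of_eventuallyEq heq)
  have happly := DFunLike.congr_fun hderiv (w, 0)
  simp only [add_apply, ContinuousLinearMap.comp_apply, ContinuousLinearMap.flip_apply,
    ContinuousLinearMap.prod_apply, ContinuousLinearMap.coe_fst', zero_apply] at happly
  rw [slopeResidual, sub_sub_eq_add_sub, eq_sub_iff_add_eq, add_comm, happly, add_comm]

lemma hasFDerivAt_slopeResidual (h : IsRadialSolution a β B) (hx : x ∈ B) (w : K) :
    HasFDerivAt (slopeResidual a β w)
      ((fderiv ℝ (fderiv ℝ β) x).flip (w, 0) - ((fderiv ℝ a (x.1, β x)).comp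
        ((ContinuousLinearMap.fst ℝ K F).prod (fderiv ℝ β x))).flip w) x := by
  have hβ := (h.hasFDerivAt_fderiv hx).clm_apply (hasFDerivAt_const ((w, 0) : K × F) x)
  have ha := (h.hasFDerivAt_slope hx).clm_apply (hasFDerivAt_const w x)
  refine (hβ.sub ha).congr_fderiv ?_
  simp

lemma fderiv_slopeResidual_radial (h : IsRadialSolution a β B) (hx : x ∈ B)
    (hinteg : IntegrableSlopeAt a (x.1, β x)) (w : K) :
    fderiv ℝ (slopeResidual a β w) x (x.1, 0) =
      fderiv ℝ a (x.1, β x) (0, slopeResidual a β w x) x.1 - slopeResidual a β w x := by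
  have hsymm : fderiv ℝ (fderiv ℝ β) x (x.1, 0) (w, 0) =
      fderiv ℝ (fderiv ℝ β) x (w, 0) (x.1, 0) :=
    (h.contDiffOn.contDiffAt (h.isOpen.mem_nhds hx)).isSymmSndFDerivAt
      (by simpa using WithTop.coe_le_coe.2 (le_top : (2 : ℕ∞) ≤ ⊤)) _ _
  have hsplit : (w, fderiv ℝ β x (w, 0)) =
      (w, a (x.1, β x) w) + ((0, slopeResidual a β w x) : K × F) := by
    simp [slopeResidual]
  rw [(h.hasFDerivAt_slopeResidual hx w).fderiv]
  simp only [sub_apply, ContinuousLinearMap.flip_apply, ContinuousLinearMap.comp_apply,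
    ContinuousLinearMap.prod_apply, ContinuousLinearMap.coe_fst']
  rw [hsymm, h.fderiv_fderiv_radial hx, h.fderiv_radial x hx, hsplit, map_add, add_apply,
    hinteg w x.1]
  abel

lemma hasDerivAt_smul_slopeResidual (h : IsRadialSolution a β B) (hx : x ∈ B)
    (hinteg : ∀ y ∈ B, IntegrableSlopeAt a (y.1, β y)) (w : K) {τ : ℝ}
    (hτ : τ ∈ Set.Icc (0 : ℝ) 1) :
    HasDerivAt (fun τ : ℝ => τ • slopeResidual a β w (τ • x.1, x.2))
      (fderiv ℝ a (τ • x.1, β (τ • x.1, x.2)) (0, τ • slopeResidual a β w (τ • x.1, x.2)) x.1)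
      τ := by
  have hmem := h.smul_mem x hx τ hτ
  have hray : HasDerivAt (fun τ : ℝ => (τ • x.1, x.2)) (x.1, 0) τ := by
    simpa using ((hasDerivAt_id τ).smul_const x.1).prodMk (hasDerivAt_const τ x.2)
  have hres := (h.hasFDerivAt_slopeResidual hmem w).differentiableAt.hasFDerivAt.comp_hasDerivAt τ
    hray
  refine ((hasDerivAt_id τ).smul hres).congr_deriv ?_
  have hradial := h.fderiv_slopeResidual_radial hmem (hinteg _ hmem) w
  have hscale : ((τ • x.1, 0) : K × F) = τ • (x.1, 0) := by simp
  have hscale' (y : F) : ((0, τ • y) : K × F) = τ • (0, y) := by simp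
  rw [hscale, map_smul, map_smul] at hradial
  simp only [id, one_smul, Function.comp_apply, hscale', map_smul, smul_apply, hradial]
  abel

/- The second derivatives of `β` agree with those prescribed by the equation only up to the
residual, so that along a ray `τ ↦ τ • residual` solves a linear homogeneous equation. -/
lemma slopeResidual_eq_zero (h : IsRadialSolution a β B)
    (hinteg : ∀ y ∈ B, IntegrableSlopeAt a (y.1, β y)) (hx : x ∈ B) (w : K) :
    slopeResidual a β w x = 0 := by
  let c : ℝ → K × F := fun τ => (τ • x.1, β (τ • x.1, x.2))
  let ρ : ℝ → F := fun τ => τ • slopeResidual a β w (τ • x.1, x.2)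
  have hρ : ∀ τ ∈ Set.Icc (0 : ℝ) 1, HasDerivAt ρ (fderiv ℝ a (c τ) (0, ρ τ) x.1) τ :=
    fun τ hτ => h.hasDerivAt_smul_slopeResidual hx hinteg w hτ
  have hc : ContinuousOn c (Set.Icc 0 1) :=
    (by fun_prop : Continuous fun τ : ℝ => τ • x.1).continuousOn.prodMk
      (h.contDiffOn.continuousOn.comp (by fun_prop) (h.smul_mem x hx))
  obtain ⟨M, hM⟩ := (isCompact_Icc (a := (0 : ℝ)) (b := 1)).exists_bound_of_continuousOn
    (f := fun τ => fderiv ℝ a (c τ)) fun τ hτ => ContinuousAt.comp_continuousWithinAt (f := c)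
      ((h.contDiffAt_slope _ (h.smul_mem x hx τ hτ)).fderiv_right (m := ∞)
        (by simp)).continuousAt (hc τ hτ)
  have hbound : ∀ τ ∈ Set.Ico (0 : ℝ) 1,
      ‖fderiv ℝ a (c τ) (0, ρ τ) x.1‖ ≤ M * ‖x.1‖ * ‖ρ τ‖ := fun τ hτ =>
    calc ‖fderiv ℝ a (c τ) (0, ρ τ) x.1‖
        ≤ ‖fderiv ℝ a (c τ)‖ * ‖((0, ρ τ) : K × F)‖ * ‖x.1‖ :=
          ContinuousLinearMap.le_opNorm₂ _ _ _
      _ = ‖fderiv ℝ a (c τ)‖ * ‖ρ τ‖ * ‖x.1‖ := by simp [Prod.norm_def]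
      _ ≤ M * ‖ρ τ‖ * ‖x.1‖ := by
          gcongr
          exact hM τ (Set.Ico_subset_Icc_self hτ)
      _ = M * ‖x.1‖ * ‖ρ τ‖ := by ring
  have hzero := eq_zero_of_abs_deriv_le_mul_abs_self_of_eq_zero_right
    (fun τ hτ => (hρ τ hτ).continuousAt.continuousWithinAt)
    (fun τ hτ => (hρ τ (Set.Ico_subset_Icc_self hτ)).hasDerivWithinAt) (by simp [ρ]) hbound
    1 (by simp)
  simpa [ρ] using hzero

end IsRadialSolution

end RadialSolution

section FirstIntegral

open scoped ContDiff Topology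

universe u

lemma exists_contDiff_cutoff_smul {E G : Type*} [NormedAddCommGroup E] [NormedSpace ℝ E]
    [HasContDiffBump E] [NormedAddCommGroup G] [NormedSpace ℝ G] {a : E → G} {N : Set E}
    (hN : IsOpen N) (ha : ContDiffOn ℝ ∞ a N) {p : E} (hp : p ∈ N) :
    ∃ χ : E → ℝ, ContDiff ℝ ∞ (fun x => χ x • a x) ∧ (∀ x ∉ N, χ x = 0) ∧
      ∃ r > 0, Metric.ball p r ⊆ N ∧ ∀ x ∈ Metric.ball p r, χ x = 1 := by
  obtain ⟨r, hr, hrN⟩ := Metric.isOpen_iff.1 hN p hp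
  let χ : ContDiffBump p := ⟨r / 4, r / 2, by positivity, by linarith⟩
  have hsupp : tsupport χ ⊆ N := by
    rw [χ.tsupport_eq]
    exact (Metric.closedBall_subset_ball (half_lt_self hr)).trans hrN
  refine ⟨χ, contDiff_iff_contDiffAt.2 fun x => ?_,
    fun x hx => image_eq_zero_of_notMem_tsupport fun h => hx (hsupp h), r / 4, by positivity,
    (Metric.ball_subset_ball (by linarith)).trans hrN,
    fun x hx => χ.one_of_mem_closedBall (Metric.ball_subset_closedBall hx)⟩
  by_cases hx : x ∈ tsupport χ
  · exact χ.contDiffAt.smul (ha.contDiffAt (hN.mem_nhds (hsupp hx)))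
  · refine contDiffAt_const (c := 0) |>.congr_of_eventuallyEq ?_
    filter_upwards [(isClosed_tsupport χ).isOpen_compl.mem_nhds hx] with y hy
    rw [image_eq_zero_of_notMem_tsupport hy, zero_smul]

lemma smul_fst_mem_ball_zero {K F : Type*} [SeminormedAddCommGroup K] [NormedSpace ℝ K]
    [SeminormedAddCommGroup F] {x : K × F} {δ τ : ℝ} (hx : x ∈ Metric.ball 0 δ)
    (hτ : τ ∈ Set.Icc (0 : ℝ) 1) : (τ • x.1, x.2) ∈ Metric.ball (0 : K × F) δ := by
  rw [mem_ball_zero_iff] at hx ⊢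
  refine lt_of_le_of_lt (max_le_max ?_ le_rfl) hx
  rw [norm_smul, Real.norm_eq_abs, abs_of_nonneg hτ.1]
  exact mul_le_of_le_one_left (norm_nonneg _) hτ.2

variable {K F : Type u} [NormedAddCommGroup K] [NormedSpace ℝ K]
  [NormedAddCommGroup F] [NormedSpace ℝ F]

lemma fderiv_radial_of_integral_eq [CompleteSpace F] {a : K × F → K →L[ℝ] F} (ha : Continuous a)
    {β : K × F → F} {B : Set (K × F)} (hB : IsOpen B) (hβ : ContDiffOn ℝ ∞ β B) {x : K × F}
    (hx : ∀ τ ∈ Set.Icc (0 : ℝ) 1, (τ • x.1, x.2) ∈ B)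
    (hinteg : ∀ τ ∈ Set.Icc (0 : ℝ) 1, β (τ • x.1, x.2) =
      x.2 + ∫ u in (0 : ℝ)..τ, a (u • x.1, β (u • x.1, x.2)) x.1) :
    fderiv ℝ β x (x.1, 0) = a (x.1, β x) x.1 := by
  let c : ℝ → K × F := fun τ => (τ • x.1, x.2)
  let g : ℝ → F := fun u => a (u • x.1, β (c u)) x.1
  have hc1 : c 1 = x := by simp [c]
  have hc : HasDerivAt c (x.1, 0) 1 := by
    simpa using ((hasDerivAt_id (1 : ℝ)).smul_const x.1).prodMk (hasDerivAt_const 1 x.2)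
  have hO : IsOpen (c ⁻¹' B) := hB.preimage (by fun_prop)
  have h1 : (1 : ℝ) ∈ c ⁻¹' B := hx 1 (by simp)
  have hβc : ContinuousOn (fun u => β (c u)) (c ⁻¹' B) :=
    hβ.continuousOn.comp (by fun_prop) fun _ h => h
  have hg : ContinuousOn g (c ⁻¹' B) :=
    (ha.comp_continuousOn ((by fun_prop : Continuous fun u : ℝ => u • x.1).continuousOn.prodMk
      hβc)).clm_apply continuousOn_const
  have hright : HasDerivAt (fun τ => x.2 + ∫ u in (0 : ℝ)..τ, g u) (g 1) 1 :=
    (intervalIntegral.integral_hasDerivAt_right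
      ((hg.mono (by rw [Set.uIcc_of_le zero_le_one]; exact hx)).intervalIntegrable)
      (hg.stronglyMeasurableAtFilter hO 1 h1) (hg.continuousAt (hO.mem_nhds h1))).const_add x.2
  have hleft : HasDerivAt (fun τ => β (c τ)) (fderiv ℝ β (c 1) (x.1, 0)) 1 :=
    (differentiableAt_of_contDiffOn_isOpen hβ hB h1).hasFDerivAt.comp_hasDerivAt 1 hc
  have heq := UniqueDiffWithinAt.eq_deriv _ (uniqueDiffOn_Icc (zero_lt_one (α := ℝ)) 1 (by simp))
    hleft.hasDerivWithinAt (hright.hasDerivWithinAt.congr hinteg (hinteg 1 (by simp)))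
  simpa [g, hc1] using heq

lemma exists_isRadialSolution [CompleteSpace K] [CompleteSpace F] {a : K × F → K →L[ℝ] F}
    (ha : ContDiff ℝ ∞ a) (ha0 : a 0 = 0) {N : Set (K × F)} (hN : N ∈ 𝓝 0) :
    ∃ δ > 0, ∃ β : K × F → F, IsRadialSolution a β (Metric.ball 0 δ) ∧
      (∀ t, (0, t) ∈ Metric.ball (0 : K × F) δ → β (0, t) = t) ∧
      ∀ x ∈ Metric.ball (0 : K × F) δ, (x.1, β x) ∈ N := by
  obtain ⟨δ₀, hδ₀, β, hβ, hinteg⟩ :=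
    exists_contDiffOn_radial_integral_eq (a := ⟨a, ha.continuous⟩) ha ha0
  have hinit : ∀ t, (0, t) ∈ Metric.ball (0 : K × F) δ₀ → β (0, t) = t := fun t ht => by
    simpa using hinteg (0, t) ht 0 (by simp)
  have hβ0 : β 0 = 0 := hinit 0 (Metric.mem_ball_self hδ₀)
  have hcont : ContinuousAt (fun x : K × F => (x.1, β x)) 0 :=
    continuousAt_fst.prodMk (hβ.continuousOn.continuousAt (Metric.ball_mem_nhds 0 hδ₀))
  have hpre : ∀ᶠ x in 𝓝 (0 : K × F), (x.1, β x) ∈ N :=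
    hcont.eventually_mem (by rwa [hβ0])
  obtain ⟨δ₁, hδ₁, hmem⟩ := Metric.eventually_nhds_iff_ball.1 hpre
  have hsub : Metric.ball (0 : K × F) (min δ₀ δ₁) ⊆ Metric.ball 0 δ₀ :=
    Metric.ball_subset_ball (min_le_left _ _)
  refine ⟨min δ₀ δ₁, lt_min hδ₀ hδ₁, β, ?_, fun t ht => hinit t (hsub ht),
    fun x hx => hmem x (Metric.ball_subset_ball (min_le_right _ _) hx)⟩
  exact {
    isOpen := Metric.isOpen_ball
    contDiffOn := hβ.mono hsub
    smul_mem := fun _ hx _ hτ => smul_fst_mem_ball_zero hx hτ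
    contDiffAt_slope := fun _ _ => ha.contDiffAt
    fderiv_radial := fun x hx => fderiv_radial_of_integral_eq ha.continuous Metric.isOpen_ball hβ
      (fun _ hτ => smul_fst_mem_ball_zero (hsub hx) hτ) (hinteg x (hsub hx)) }

lemma fderiv_zero_eq_snd {β : K × F → F} (hβ : DifferentiableAt ℝ β 0)
    (hfst : ∀ w, fderiv ℝ β 0 (w, 0) = 0) (hinit : ∀ᶠ t in 𝓝 (0 : F), β (0, t) = t) :
    fderiv ℝ β 0 = ContinuousLinearMap.snd ℝ K F := by
  have hcomp := hβ.hasFDerivAt.comp (0 : F) (ContinuousLinearMap.inr ℝ K F).hasFDerivAt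
  have hid := hcomp.unique ((hasFDerivAt_id (0 : F)).congr_of_eventuallyEq hinit)
  ext x
  · simpa using hfst x
  · simpa using DFunLike.congr_fun hid x

/- Straightening: the map `(s, t) ↦ (s, β (s, t))` is a local diffeomorphism, and the `t`-component
of its inverse is constant along the graphs `s ↦ (s, β (s, t))`. -/
lemma exists_firstIntegral_of_solution [CompleteSpace K] [CompleteSpace F]
    {a : K × F → K →L[ℝ] F} {β : K × F → F} {B : Set (K × F)} (hB : IsOpen B) (h0 : 0 ∈ B)
    (hβ : ContDiffOn ℝ ∞ β B) (hβ0 : β 0 = 0) (hβ0' : fderiv ℝ β 0 = ContinuousLinearMap.snd ℝ K F)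
    (hsol : ∀ x ∈ B, ∀ w, fderiv ℝ β x (w, 0) = a (x.1, β x) w) :
    ∃ N : Set (K × F), IsOpen N ∧ 0 ∈ N ∧ ∃ H : K × F → F, ContDiffOn ℝ ∞ H N ∧
      fderiv ℝ H 0 = ContinuousLinearMap.snd ℝ K F ∧ ∀ x ∈ N, ∀ w, fderiv ℝ H x (w, a x w) = 0 := by
  let Ψ : K × F → K × F := fun x => (x.1, β x)
  have hΨ0 : Ψ 0 = 0 := Prod.ext rfl hβ0
  have hΨ' : ∀ x ∈ B, HasFDerivAt Ψ ((ContinuousLinearMap.fst ℝ K F).prod (fderiv ℝ β x)) x :=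
    fun x hx => hasFDerivAt_fst.prodMk
      (differentiableAt_of_contDiffOn_isOpen hβ hB hx).hasFDerivAt
  have hΨ0' : HasFDerivAt Ψ (ContinuousLinearEquiv.refl ℝ (K × F) : K × F →L[ℝ] K × F) 0 := by
    have := hΨ' 0 h0
    rwa [hβ0'] at this
  have hΨ : ContDiffOn ℝ ∞ Ψ B := contDiff_fst.contDiffOn.prodMk hβ
  obtain ⟨e, h0e, heB, heΨ, hsymm⟩ := exists_openPartialHomeomorph_contDiffOn_symm hB hΨ h0 hΨ0'
  have hH : ContDiffOn ℝ ∞ (fun y => (e.symm y).2) e.target := contDiff_snd.comp_contDiffOn hsymm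
  have hchain : ∀ x ∈ e.source, (fderiv ℝ (fun y => (e.symm y).2) (Ψ x)).comp
      ((ContinuousLinearMap.fst ℝ K F).prod (fderiv ℝ β x)) = ContinuousLinearMap.snd ℝ K F := by
    intro x hx
    have hxt : Ψ x ∈ e.target := by rw [← heΨ]; exact e.map_source hx
    have hcomp := (differentiableAt_of_contDiffOn_isOpen hH e.open_target hxt).hasFDerivAt.comp x
      (hΨ' x (heB hx))
    refine hcomp.unique (hasFDerivAt_snd.congr_of_eventuallyEq ?_)
    filter_upwards [e.open_source.mem_nhds hx] with y hy
    exact congrArg Prod.snd ((congrArg e.symm (congrFun heΨ y).symm).trans (e.left_inv hy))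
  refine ⟨e.target, e.open_target, ?_, _, hH, ?_, fun y hy w => ?_⟩
  · have h0t := e.map_source h0e
    rwa [heΨ, hΨ0] at h0t
  · simpa [hΨ0, hβ0'] using hchain 0 h0e
  · have hxy : Ψ (e.symm y) = y := by rw [← heΨ]; exact e.right_inv hy
    have hxy' : ((e.symm y).1, β (e.symm y)) = y := hxy
    have happly := DFunLike.congr_fun (hchain _ (e.map_target hy)) (w, 0)
    simpa [hxy, hxy', hsol _ (heB (e.map_target hy))] using happly

lemma exists_firstIntegral_of_integrableSlope [FiniteDimensional ℝ K] [FiniteDimensional ℝ F]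
    {a : K × F → K →L[ℝ] F} {N : Set (K × F)} (hN : IsOpen N) (h0 : 0 ∈ N)
    (ha : ContDiffOn ℝ ∞ a N) (ha0 : a 0 = 0) (hinteg : ∀ x ∈ N, IntegrableSlopeAt a x) :
    ∃ N' ⊆ N, IsOpen N' ∧ 0 ∈ N' ∧ ∃ H : K × F → F, ContDiffOn ℝ ∞ H N' ∧
      fderiv ℝ H 0 = ContinuousLinearMap.snd ℝ K F ∧
      ∀ x ∈ N', ∀ w, fderiv ℝ H x (w, a x w) = 0 := by
  have : CompleteSpace K := FiniteDimensional.complete ℝ K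
  have : CompleteSpace F := FiniteDimensional.complete ℝ F
  obtain ⟨χ, hb, -, r, hr, hrN, hχ⟩ := exists_contDiff_cutoff_smul hN ha h0
  set b : K × F → K →L[ℝ] F := fun x => χ x • a x
  have hba : Set.EqOn b a (Metric.ball 0 r) := fun x hx => by simp only [b, hχ x hx, one_smul]
  have hb0 : b (0, 0) = 0 := (hba (Metric.mem_ball_self hr)).trans ha0
  have hbint : ∀ x ∈ Metric.ball 0 r, IntegrableSlopeAt b x := fun x hx w w' => by
    rw [(hba.eventuallyEq_of_mem (Metric.isOpen_ball.mem_nhds hx)).fderiv_eq, hba hx]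
    exact hinteg x (hrN hx) w w'
  obtain ⟨δ, hδ, β, hβ, hinit, hmem⟩ :=
    exists_isRadialSolution hb hb0 (Metric.ball_mem_nhds (0 : K × F) hr)
  have h0δ : (0 : K × F) ∈ Metric.ball 0 δ := Metric.mem_ball_self hδ
  have hsol : ∀ x ∈ Metric.ball 0 δ, ∀ w, fderiv ℝ β x (w, 0) = b (x.1, β x) w :=
    fun x hx w => sub_eq_zero.1 (hβ.slopeResidual_eq_zero (fun y hy => hbint _ (hmem y hy)) hx w)
  have hβ0 : β 0 = 0 := hinit 0 h0δ
  have hinit' : ∀ᶠ t in 𝓝 (0 : F), β (0, t) = t := by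
    have hincl : ContinuousAt (fun t : F => ((0 : K), t)) 0 := by fun_prop
    filter_upwards [hincl.preimage_mem_nhds (Metric.ball_mem_nhds (0 : K × F) hδ)] using hinit
  have hβ0' := fderiv_zero_eq_snd
    (differentiableAt_of_contDiffOn_isOpen hβ.contDiffOn hβ.isOpen h0δ)
    (fun w => by simpa [hβ0, hb0] using hsol 0 h0δ w) hinit'
  obtain ⟨N', hN'o, h0N', H, hH, hH0, hHw⟩ :=
    exists_firstIntegral_of_solution hβ.isOpen h0δ hβ.contDiffOn hβ0 hβ0' hsol
  refine ⟨N' ∩ Metric.ball 0 r, fun x hx => hrN hx.2, hN'o.inter Metric.isOpen_ball,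
    ⟨h0N', Metric.mem_ball_self hr⟩, H, hH.mono Set.inter_subset_left, hH0, fun x hx w => ?_⟩
  rw [← hba hx.2]
  exact hHw x hx.1 w

end FirstIntegral

section Frobenius

open scoped ContDiff Topology

universe u

/-- Involutivity, in the sense of Frobenius, of the field of subspaces `ker (θ x)`, `x ∈ N`. The
quantification over open `M ⊆ N` allows for fields of kernel vectors which are only locally
defined. -/
def HasInvolutiveKer {E F : Type*} [NormedAddCommGroup E] [NormedSpace ℝ E]
    [NormedAddCommGroup F] [NormedSpace ℝ F] (θ : E → E →L[ℝ] F) (N : Set E) : Prop :=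
  ∀ M ⊆ N, IsOpen M → ∀ V W : E → E, ContDiffOn ℝ ∞ V M → ContDiffOn ℝ ∞ W M →
    (∀ x ∈ M, θ x (V x) = 0) → (∀ x ∈ M, θ x (W x) = 0) →
    ∀ x ∈ M, θ x (VectorField.lieBracket ℝ V W x) = 0

section Pullback

variable {E E' F : Type*} [NormedAddCommGroup E] [NormedSpace ℝ E] [NormedAddCommGroup E']
  [NormedSpace ℝ E'] [NormedAddCommGroup F] [NormedSpace ℝ F]

lemma lieBracket_affine_conj (J : E ≃L[ℝ] E') (p y : E) {V W : E' → E'}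
    (hV : DifferentiableAt ℝ V (J (y - p))) (hW : DifferentiableAt ℝ W (J (y - p))) :
    VectorField.lieBracket ℝ (fun z => J.symm (V (J (z - p)))) (fun z => J.symm (W (J (z - p)))) y =
      J.symm (VectorField.lieBracket ℝ V W (J (y - p))) := by
  have hconj : ∀ {X : E' → E'}, DifferentiableAt ℝ X (J (y - p)) →
      ∀ v, fderiv ℝ (fun z => J.symm (X (J (z - p)))) y v =
        J.symm (fderiv ℝ X (J (y - p)) (J v)) := fun {X} hX v => by
    have hJ : HasFDerivAt (fun z : E => J (z - p)) (J : E →L[ℝ] E') y :=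
      J.hasFDerivAt.comp y ((hasFDerivAt_id y).sub_const p)
    exact DFunLike.congr_fun (J.symm.hasFDerivAt.comp y (hX.hasFDerivAt.comp y hJ)).fderiv v
  rw [VectorField.lieBracket, hconj hV, hconj hW, J.apply_symm_apply, J.apply_symm_apply,
    ← map_sub, VectorField.lieBracket]

lemma HasInvolutiveKer.comp_affine {θ : E → E →L[ℝ] F} {N : Set E} (hθ : HasInvolutiveKer θ N)
    (J : E ≃L[ℝ] E') (p : E) :
    HasInvolutiveKer (fun x => (θ (p + J.symm x)).comp (J.symm : E' →L[ℝ] E))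
      ((fun x => p + J.symm x) ⁻¹' N) := by
  intro M hMN hM V W hV hW hθV hθW x hx
  have hg : ContDiff ℝ ∞ fun y : E => J (y - p) := J.contDiff.comp (contDiff_id.sub contDiff_const)
  have hconj : ∀ {X : E' → E'}, ContDiffOn ℝ ∞ X M →
      ContDiffOn ℝ ∞ (fun z => J.symm (X (J (z - p)))) ((fun y => J (y - p)) ⁻¹' M) := fun hX =>
    J.symm.contDiff.comp_contDiffOn (hX.comp hg.contDiffOn fun _ h => h)
  have hker : ∀ {X : E' → E'},
      (∀ x ∈ M, (θ (p + J.symm x)).comp (J.symm : E' →L[ℝ] E) (X x) = 0) →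
      ∀ y ∈ (fun y => J (y - p)) ⁻¹' M, θ y (J.symm (X (J (y - p)))) = 0 := fun hX y hy => by
    simpa using hX _ hy
  have hbr := hθ ((fun y => J (y - p)) ⁻¹' M) (fun y hy => by simpa using hMN hy)
    (hM.preimage hg.continuous) _ _ (hconj hV) (hconj hW) (hker hθV) (hker hθW) (p + J.symm x)
    (by simpa using hx)
  have hx' : J (p + J.symm x - p) = x := by simp
  rw [lieBracket_affine_conj J p _
    (by rw [hx']; exact differentiableAt_of_contDiffOn_isOpen hV hM hx)
    (by rw [hx']; exact differentiableAt_of_contDiffOn_isOpen hW hM hx), hx'] at hbr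
  exact hbr

end Pullback

section Slope

variable {K F : Type u} [NormedAddCommGroup K] [NormedSpace ℝ K] [NormedAddCommGroup F]
  [NormedSpace ℝ F]

/-- The linear map whose graph is `ker (θ x)`, provided that the restriction of `θ x` to the second
factor is invertible; otherwise a junk value. -/
noncomputable def graphSlope (θ : K × F → K × F →L[ℝ] F) (x : K × F) : K →L[ℝ] F :=
  -((θ x).comp (.inr ℝ K F)).inverse.comp ((θ x).comp (.inl ℝ K F))

lemma eq_zero_iff_snd_eq_graphSlope {θ : K × F → K × F →L[ℝ] F} {x : K × F}
    (hx : ((θ x).comp (.inr ℝ K F)).IsInvertible) (v : K × F) :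
    θ x v = 0 ↔ v.2 = graphSlope θ x v.1 := by
  have hsplit : θ x v = (θ x).comp (.inl ℝ K F) v.1 + (θ x).comp (.inr ℝ K F) v.2 := by
    simp [← map_add]
  have hslope : (θ x).comp (.inr ℝ K F) (graphSlope θ x v.1) = -(θ x).comp (.inl ℝ K F) v.1 := by
    simp only [graphSlope, neg_apply, map_neg]
    exact congrArg _ (hx.self_apply_inverse _)
  rw [hsplit, add_comm, add_eq_zero_iff_eq_neg, ← hslope, hx.injective.eq_iff]

lemma isOpen_inter_isInvertible_comp_inr [CompleteSpace F] {θ : K × F → K × F →L[ℝ] F}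
    {N : Set (K × F)} (hN : IsOpen N) (hθ : ContinuousOn θ N) :
    IsOpen (N ∩ {x | ((θ x).comp (.inr ℝ K F)).IsInvertible}) :=
  (hθ.clm_comp continuousOn_const).isOpen_inter_preimage hN ContinuousLinearEquiv.isOpen

lemma contDiffOn_graphSlope [CompleteSpace F] {θ : K × F → K × F →L[ℝ] F} {N : Set (K × F)}
    (hθ : ContDiffOn ℝ ∞ θ N) (hinv : ∀ x ∈ N, ((θ x).comp (.inr ℝ K F)).IsInvertible) :
    ContDiffOn ℝ ∞ (graphSlope θ) N := by
  refine ContDiffOn.neg (ContDiffOn.clm_comp (fun x hx => ?_) (hθ.clm_comp contDiffOn_const))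
  exact (hinv x hx).contDiffAt_map_inverse.comp_contDiffWithinAt x
    ((hθ x hx).clm_comp contDiffWithinAt_const)

lemma integrableSlopeAt_graphSlope [CompleteSpace F] {θ : K × F → K × F →L[ℝ] F}
    {N : Set (K × F)} (hN : IsOpen N) (hθ : ContDiffOn ℝ ∞ θ N) (hker : HasInvolutiveKer θ N)
    (hinv : ∀ x ∈ N, ((θ x).comp (.inr ℝ K F)).IsInvertible) {x : K × F} (hx : x ∈ N) :
    IntegrableSlopeAt (graphSlope θ) x := by
  intro w w'
  let V : K → K × F → K × F := fun w y => (w, graphSlope θ y w)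
  have hslope := contDiffOn_graphSlope hθ hinv
  have hV : ∀ w, ContDiffOn ℝ ∞ (V w) N := fun w =>
    contDiffOn_const.prodMk (hslope.clm_apply contDiffOn_const)
  have hθV : ∀ w, ∀ y ∈ N, θ y (V w y) = 0 := fun w y hy =>
    (eq_zero_iff_snd_eq_graphSlope (hinv y hy) _).2 rfl
  have hV' : ∀ w v, fderiv ℝ (V w) x v = (0, fderiv ℝ (graphSlope θ) x v w) := fun w v => by
    have hd := (hasFDerivAt_const w x).prodMk
      ((differentiableAt_of_contDiffOn_isOpen hslope hN hx).hasFDerivAt.clm_apply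
        (hasFDerivAt_const w x))
    rw [HasFDerivAt.fderiv (f := V w) hd]
    simp
  have hbr := hker N subset_rfl hN (V w) (V w') (hV w) (hV w') (hθV w) (hθV w') x hx
  rw [eq_zero_iff_snd_eq_graphSlope (hinv x hx)] at hbr
  simpa [VectorField.lieBracket, hV', sub_eq_zero, V] using hbr

lemma exists_firstIntegral_of_eq_snd [FiniteDimensional ℝ K] [FiniteDimensional ℝ F]
    {θ : K × F → K × F →L[ℝ] F} {N : Set (K × F)} (hN : IsOpen N) (h0 : 0 ∈ N)
    (hθ : ContDiffOn ℝ ∞ θ N) (hker : HasInvolutiveKer θ N)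
    (hθ0 : θ 0 = ContinuousLinearMap.snd ℝ K F) :
    ∃ N' ⊆ N, IsOpen N' ∧ 0 ∈ N' ∧ ∃ H : K × F → F, ContDiffOn ℝ ∞ H N' ∧
      fderiv ℝ H 0 = θ 0 ∧ ∀ x ∈ N', ∀ v, θ x v = 0 → fderiv ℝ H x v = 0 := by
  have : CompleteSpace F := FiniteDimensional.complete ℝ F
  set D := N ∩ {x | ((θ x).comp (.inr ℝ K F)).IsInvertible}
  have hDN : D ⊆ N := Set.inter_subset_left
  have hDo : IsOpen D := isOpen_inter_isInvertible_comp_inr hN hθ.continuousOn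
  have h0D : 0 ∈ D := ⟨h0, ContinuousLinearEquiv.refl ℝ F, by rw [hθ0]; rfl⟩
  have hslope0 : graphSlope θ 0 = 0 := by
    ext w
    exact ((eq_zero_iff_snd_eq_graphSlope h0D.2 (w, 0)).1 (by simp [hθ0])).symm
  obtain ⟨N', hN'D, hN'o, h0N', H, hH, hH0, hHw⟩ := exists_firstIntegral_of_integrableSlope hDo h0D
    (contDiffOn_graphSlope (hθ.mono hDN) fun x hx => hx.2) hslope0 fun x hx =>
      integrableSlopeAt_graphSlope hDo (hθ.mono hDN) (fun M hM => hker M (hM.trans hDN))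
        (fun x hx => hx.2) hx
  refine ⟨N', hN'D.trans hDN, hN'o, h0N', H, hH, hH0.trans hθ0.symm, fun x hx v hv => ?_⟩
  have hv2 := (eq_zero_iff_snd_eq_graphSlope (hN'D hx).2 v).1 hv
  simpa [← hv2] using hHw x hx v.1

end Slope

lemma exists_equiv_prod_ker_snd_eq {E F : Type*} [NormedAddCommGroup E] [NormedSpace ℝ E]
    [NormedAddCommGroup F] [NormedSpace ℝ F] [FiniteDimensional ℝ F] {L : E →L[ℝ] F}
    (hL : Function.Surjective L) : ∃ J : E ≃L[ℝ] L.ker × F, ∀ v, (J v).2 = L v := by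
  have : CompleteSpace F := FiniteDimensional.complete ℝ F
  obtain ⟨σ, hσ⟩ := L.exists_rightInverse_of_surjective (LinearMap.range_eq_top.2 hL)
  exact ⟨(ContinuousLinearEquiv.equivOfRightInverse L σ (DFunLike.congr_fun hσ)).trans
    (ContinuousLinearEquiv.prodComm ℝ F L.ker), fun _ => rfl⟩

theorem exists_firstIntegral_of_hasInvolutiveKer {E F : Type u} [NormedAddCommGroup E]
    [NormedSpace ℝ E] [FiniteDimensional ℝ E] [NormedAddCommGroup F] [NormedSpace ℝ F]
    [FiniteDimensional ℝ F] {N : Set E} (hN : IsOpen N) {θ : E → E →L[ℝ] F}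
    (hθ : ContDiffOn ℝ ∞ θ N) {p : E} (hp : p ∈ N) (hsurj : Function.Surjective (θ p))
    (hker : HasInvolutiveKer θ N) :
    ∃ N' ⊆ N, IsOpen N' ∧ p ∈ N' ∧ ∃ H : E → F, ContDiffOn ℝ ∞ H N' ∧ fderiv ℝ H p = θ p ∧
      ∀ x ∈ N', ∀ v, θ x v = 0 → fderiv ℝ H x v = 0 := by
  obtain ⟨J, hJ⟩ := exists_equiv_prod_ker_snd_eq hsurj
  let A : (θ p).ker × F → E := fun x => p + J.symm x
  let g : E → (θ p).ker × F := fun y => J (y - p)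
  have hA : ContDiff ℝ ∞ A := contDiff_const.add J.symm.contDiff
  have hg : ContDiff ℝ ∞ g := J.contDiff.comp (contDiff_id.sub contDiff_const)
  have hg' : ∀ y, HasFDerivAt g (J : E →L[ℝ] (θ p).ker × F) y := fun y =>
    J.hasFDerivAt.comp y ((hasFDerivAt_id y).sub_const p)
  have hgp : g p = 0 := by simp [g]
  have hAg : ∀ y, p + J.symm (g y) = y := by simp [g]
  have hsnd : (θ (A 0)).comp (J.symm : (θ p).ker × F →L[ℝ] E) = .snd ℝ (θ p).ker F := by
    ext v <;> simp [A, ← hJ]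
  obtain ⟨N', hN', hN'o, h0, H, hH, hH0, hHker⟩ := exists_firstIntegral_of_eq_snd
    (hN.preimage hA.continuous) (by simpa [A] using hp)
    ((hθ.comp hA.contDiffOn fun _ h => h).clm_comp contDiffOn_const) (hker.comp_affine J p) hsnd
  have hHg : ∀ y, g y ∈ N' → ∀ v, fderiv ℝ (fun y => H (g y)) y v = fderiv ℝ H (g y) (J v) :=
    fun y hy => DFunLike.congr_fun
      ((differentiableAt_of_contDiffOn_isOpen hH hN'o hy).hasFDerivAt.comp y (hg' y)).fderiv
  have hpN' : g p ∈ N' := by rwa [hgp]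
  refine ⟨g ⁻¹' N', fun y hy => ?_, hN'o.preimage hg.continuous, hpN', fun y => H (g y),
    hH.comp hg.contDiffOn fun _ h => h, ?_, fun y hy v hv => ?_⟩
  · simpa only [A, Set.mem_preimage, hAg] using hN' hy
  · ext v
    rw [hHg p hpN', hgp, hH0]
    simp [A]
  · rw [hHg y hy]
    exact hHker _ hy _ (by simpa [A, hAg] using hv)

end Frobenius

/-! ### Flags of a distribution and exterior derivatives -/

section Flag

open scoped ContDiff

variable {n : ℕ} {U : Set (Fin n → ℝ)} {A B Δ S : Set (VF n)} {q : Fin n → ℝ}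

/-- The subspace of `ℝⁿ` spanned by the values at `q` of a set of vector fields; its dimension is
`evalDim`. -/
noncomputable def evalSpan (A : Set (VF n)) (q : Fin n → ℝ) : Submodule ℝ (Fin n → ℝ) :=
  Submodule.span ℝ {w | ∃ X ∈ A, w = X q}

lemma apply_mem_evalSpan {X : VF n} (hX : X ∈ A) (q : Fin n → ℝ) : X q ∈ evalSpan A q :=
  Submodule.subset_span ⟨X, hX, rfl⟩

lemma evalSpan_mono (h : A ⊆ B) (q : Fin n → ℝ) : evalSpan A q ≤ evalSpan B q :=
  Submodule.span_mono fun _ ⟨X, hX, hw⟩ => ⟨X, h hX, hw⟩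

lemma apply_eq_zero_of_mem_evalSpan {ξ : Covector n} (h : ∀ X ∈ A, ξ (X q) = 0)
    {v : Fin n → ℝ} (hv : v ∈ evalSpan A q) : ξ v = 0 := by
  have hle : evalSpan A q ≤ LinearMap.ker ξ.toLinearMap :=
    Submodule.span_le.2 fun _ ⟨X, hX, hw⟩ => hw ▸ h X hX
  exact hle hv

lemma zero_mem_spanOn (U : Set (Fin n → ℝ)) (S : Set (VF n)) : 0 ∈ spanOn U S :=
  ⟨0, Fin.elim0, Fin.elim0, fun i => i.elim0, fun i => i.elim0, by simp⟩

lemma subset_spanOn (U : Set (Fin n → ℝ)) (S : Set (VF n)) : S ⊆ spanOn U S := fun X hX =>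
  ⟨1, fun _ _ => 1, fun _ => X, fun _ => contDiffOn_const, fun _ => hX, by simp⟩

lemma contDiffOn_of_mem_spanOn (hS : ∀ X ∈ S, ContDiffOn ℝ ∞ X U) :
    ∀ X ∈ spanOn U S, ContDiffOn ℝ ∞ X U := by
  rintro X ⟨m, c, Y, hc, hY, hX⟩
  exact (ContDiffOn.sum fun i _ => (hc i).smul (hS _ (hY i))).congr hX

lemma apply_eq_zero_of_mem_spanOn (hq : q ∈ U) {ξ : Covector n} (h : ∀ X ∈ S, ξ (X q) = 0) :
    ∀ X ∈ spanOn U S, ξ (X q) = 0 := by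
  rintro X ⟨m, c, Y, -, hY, hX⟩
  rw [hX q hq, map_sum]
  exact Finset.sum_eq_zero fun i _ => by rw [map_smul, h _ (hY i), smul_zero]

lemma apply_eq_zero_of_mem_addOn (hq : q ∈ U) {ξ : Covector n} (hA : ∀ X ∈ A, ξ (X q) = 0)
    (hB : ∀ X ∈ B, ξ (X q) = 0) : ∀ X ∈ addOn U A B, ξ (X q) = 0 := by
  rintro X ⟨Y, hY, Z, hZ, hX⟩
  rw [hX q hq, map_add, hA Y hY, hB Z hZ, add_zero]

lemma contDiffOn_lieBracket (hU : IsOpen U) {X Y : VF n} (hX : ContDiffOn ℝ ∞ X U)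
    (hY : ContDiffOn ℝ ∞ Y U) : ContDiffOn ℝ ∞ (lieBracket X Y) U :=
  ((hY.fderiv_of_isOpen hU (by simp)).clm_apply hX).sub
    ((hX.fderiv_of_isOpen hU (by simp)).clm_apply hY)

lemma contDiffOn_of_mem_derivedFlag (hU : IsOpen U) (hΔ : ∀ X ∈ Δ, ContDiffOn ℝ ∞ X U) (k : ℕ) :
    ∀ X ∈ derivedFlag U Δ k, ContDiffOn ℝ ∞ X U := by
  induction k with
  | zero => exact hΔ
  | succ k ih =>
    rintro X ⟨Y, hY, Z, hZ, hX⟩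
    refine ((ih Y hY).add (contDiffOn_of_mem_spanOn ?_ Z hZ)).congr hX
    rintro _ ⟨V, hV, W, hW, rfl⟩
    exact contDiffOn_lieBracket hU (ih V hV) (ih W hW)

lemma derivedFlag_mono : Monotone (derivedFlag U Δ) :=
  monotone_nat_of_le_succ fun _ X hX => ⟨X, hX, 0, zero_mem_spanOn _ _, by simp⟩

lemma subset_derivedFlag (k : ℕ) : Δ ⊆ derivedFlag U Δ k :=
  derivedFlag_mono (Nat.zero_le k)

lemma lieBracket_mem_derivedFlag_succ (h0 : 0 ∈ Δ) {k : ℕ} {X Y : VF n}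
    (hX : X ∈ derivedFlag U Δ k) (hY : Y ∈ derivedFlag U Δ k) :
    lieBracket X Y ∈ derivedFlag U Δ (k + 1) :=
  ⟨0, subset_derivedFlag k h0, lieBracket X Y, subset_spanOn _ _ ⟨X, hX, Y, hY, rfl⟩, by simp⟩

lemma lieFlag_subset_derivedFlag (k : ℕ) : lieFlag U Δ k ⊆ derivedFlag U Δ k := by
  induction k with
  | zero => exact subset_rfl
  | succ k ih =>
    rintro X ⟨Y, hY, Z, ⟨m, c, T, hc, hT, hZ⟩, hX⟩
    refine ⟨Y, ih hY, Z, ⟨m, c, T, hc, fun i => ?_, hZ⟩, hX⟩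
    obtain ⟨V, hV, W, hW, hVW⟩ := hT i
    exact ⟨V, ih hV, W, subset_derivedFlag k hW, hVW⟩

lemma apply_eq_zero_of_mem_derivedFlag_succ {k : ℕ} (hq : q ∈ U) {ξ : Covector n}
    (hflag : ∀ X ∈ derivedFlag U Δ k, ξ (X q) = 0)
    (hbracket : ∀ X ∈ derivedFlag U Δ k, ∀ Y ∈ derivedFlag U Δ k, ξ (lieBracket X Y q) = 0) :
    ∀ X ∈ derivedFlag U Δ (k + 1), ξ (X q) = 0 :=
  apply_eq_zero_of_mem_addOn hq hflag <| apply_eq_zero_of_mem_spanOn hq fun _ ⟨X, hX, Y, hY, h⟩ =>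
    h ▸ hbracket X hX Y hY

lemma apply_eq_zero_of_mem_lieFlag_succ {k : ℕ} (hq : q ∈ U) {ξ : Covector n}
    (hflag : ∀ X ∈ lieFlag U Δ k, ξ (X q) = 0)
    (hbracket : ∀ X ∈ lieFlag U Δ k, ∀ Y ∈ Δ, ξ (lieBracket X Y q) = 0) :
    ∀ X ∈ lieFlag U Δ (k + 1), ξ (X q) = 0 :=
  apply_eq_zero_of_mem_addOn hq hflag <| apply_eq_zero_of_mem_spanOn hq fun _ ⟨X, hX, Y, hY, h⟩ =>
    h ▸ hbracket X hX Y hY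

end Flag

section ExteriorDerivative

open scoped ContDiff

variable {n : ℕ} {U N : Set (Fin n → ℝ)} {η : OneForm n} {X Y : VF n} {q : Fin n → ℝ}

lemma intExtDer_apply (η : OneForm n) (q v w : Fin n → ℝ) :
    intExtDer η q v w = fderiv ℝ η q v w - fderiv ℝ η q w v := rfl

lemma intExtDer_swap (η : OneForm n) (q v w : Fin n → ℝ) :
    intExtDer η q v w = -intExtDer η q w v := by simp [intExtDer_apply]

lemma intExtDer_self (η : OneForm n) (q v : Fin n → ℝ) : intExtDer η q v v = 0 := by
  simp [intExtDer_apply]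

lemma intExtDer_zero (η : OneForm n) (q : Fin n → ℝ) : intExtDer η q 0 = 0 := by
  simp [intExtDer]

lemma intExtDer_add (η : OneForm n) (q v w : Fin n → ℝ) :
    intExtDer η q (v + w) = intExtDer η q v + intExtDer η q w := by
  simp only [intExtDer, map_add]
  abel

lemma intExtDer_smul (η : OneForm n) (q : Fin n → ℝ) (c : ℝ) (v : Fin n → ℝ) :
    intExtDer η q (c • v) = c • intExtDer η q v := by
  simp only [intExtDer, map_smul, smul_sub]

lemma contDiffOn_intExtDer (hN : IsOpen N) (hη : ContDiffOn ℝ ∞ η N) (hX : ContDiffOn ℝ ∞ X N) :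
    ContDiffOn ℝ ∞ (fun x => intExtDer η x (X x)) N := by
  have hdη : ContDiffOn ℝ ∞ (fderiv ℝ η) N := hη.fderiv_of_isOpen hN (by simp)
  exact contDiffOn_clm_apply.2 fun w => ((hdη.clm_apply hX).clm_apply contDiffOn_const).sub
    ((hdη.clm_apply contDiffOn_const).clm_apply hX)

lemma fderiv_apply_eq_neg_apply_fderiv (hN : IsOpen N) (hη : ContDiffOn ℝ ∞ η N)
    (hX : ContDiffOn ℝ ∞ X N) (h : ∀ x ∈ N, η x (X x) = 0) (hq : q ∈ N) (v : Fin n → ℝ) :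
    fderiv ℝ η q v (X q) = -η q (fderiv ℝ X q v) := by
  have hprod := (differentiableAt_of_contDiffOn_isOpen hη hN hq).hasFDerivAt.clm_apply
    (differentiableAt_of_contDiffOn_isOpen hX hN hq).hasFDerivAt
  have hzero : (fun x => η x (X x)) =ᶠ[nhds q] fun _ => 0 :=
    Filter.mem_of_superset (hN.mem_nhds hq) h
  have hsum := DFunLike.congr_fun
    (hprod.unique ((hasFDerivAt_const (0 : ℝ) q).congr_of_eventuallyEq hzero)) v
  simp only [add_apply, ContinuousLinearMap.comp_apply, ContinuousLinearMap.flip_apply,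
    zero_apply] at hsum
  linarith

lemma intExtDer_eq_neg_apply_lieBracket (hN : IsOpen N) (hη : ContDiffOn ℝ ∞ η N)
    (hX : ContDiffOn ℝ ∞ X N) (hY : ContDiffOn ℝ ∞ Y N) (hηX : ∀ x ∈ N, η x (X x) = 0)
    (hηY : ∀ x ∈ N, η x (Y x) = 0) (hq : q ∈ N) :
    intExtDer η q (X q) (Y q) = -η q (lieBracket X Y q) := by
  rw [intExtDer_apply, fderiv_apply_eq_neg_apply_fderiv hN hη hX hηX hq,
    fderiv_apply_eq_neg_apply_fderiv hN hη hY hηY hq, lieBracket, map_sub]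
  ring

lemma apply_lieBracket_eq_zero (hN : IsOpen N) (hη : ContDiffOn ℝ ∞ η N)
    (hX : ContDiffOn ℝ ∞ X N) (hY : ContDiffOn ℝ ∞ Y N) (hηX : ∀ x ∈ N, η x (X x) = 0)
    (hηY : ∀ x ∈ N, η x (Y x) = 0) (hq : q ∈ N) (hXY : intExtDer η q (X q) (Y q) = 0) :
    η q (lieBracket X Y q) = 0 := by
  rwa [intExtDer_eq_neg_apply_lieBracket hN hη hX hY hηX hηY hq, neg_eq_zero] at hXY

lemma minSmoothness_two_le_infty : minSmoothness ℝ 2 ≤ (∞ : WithTop ℕ∞) := by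
  rw [minSmoothness_of_isRCLikeNormedField]
  exact WithTop.coe_le_coe.2 (le_top : (2 : ℕ∞) ≤ ⊤)

lemma lieBracket_lieBracket (hN : IsOpen N) {Z : VF n} (hX : ContDiffOn ℝ ∞ X N)
    (hY : ContDiffOn ℝ ∞ Y N) (hZ : ContDiffOn ℝ ∞ Z N) (hq : q ∈ N) :
    lieBracket X (lieBracket Y Z) q =
      lieBracket (lieBracket X Y) Z q + lieBracket Y (lieBracket X Z) q :=
  VectorField.leibniz_identity_lieBracket (𝕜 := ℝ) minSmoothness_two_le_infty
    (hX.contDiffAt (hN.mem_nhds hq)) (hY.contDiffAt (hN.mem_nhds hq))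
    (hZ.contDiffAt (hN.mem_nhds hq))

lemma intExtDer_fderiv {h : (Fin n → ℝ) → ℝ} (hN : IsOpen N) (hh : ContDiffOn ℝ ∞ h N)
    (hq : q ∈ N) (v w : Fin n → ℝ) : intExtDer (fderiv ℝ h) q v w = 0 := by
  rw [intExtDer_apply, sub_eq_zero]
  exact (hh.contDiffAt (hN.mem_nhds hq)).isSymmSndFDerivAt minSmoothness_two_le_infty v w

/- The point is that `u` does not depend on the form: it is the value of a bracket of sections
through `v` and `w`. -/
lemma exists_mem_evalSpan_intExtDer_eq_neg (hU : IsOpen U) {Δ : Set (VF n)}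
    (hΔ : ∀ X ∈ Δ, ContDiffOn ℝ ∞ X U) (h0 : 0 ∈ Δ) {k : ℕ} {v w : Fin n → ℝ}
    (hv : v ∈ evalSpan (derivedFlag U Δ k) q) (hw : w ∈ evalSpan (derivedFlag U Δ k) q) :
    ∃ u ∈ evalSpan (derivedFlag U Δ (k + 1)) q, ∀ N ⊆ U, IsOpen N → q ∈ N →
      ∀ η ∈ annihilatorOn N (derivedFlag U Δ k), intExtDer η q v w = -η q u := by
  induction hv, hw using Submodule.span_induction₂ with
  | mem_mem v w hv hw =>
    obtain ⟨X, hX, rfl⟩ := hv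
    obtain ⟨Y, hY, rfl⟩ := hw
    have hsmooth := contDiffOn_of_mem_derivedFlag hU hΔ k
    exact ⟨_, apply_mem_evalSpan (lieBracket_mem_derivedFlag_succ h0 hX hY) q,
      fun N hNU hN hq η hη => intExtDer_eq_neg_apply_lieBracket hN hη.1 ((hsmooth X hX).mono hNU)
        ((hsmooth Y hY).mono hNU) (hη.2 X hX) (hη.2 Y hY) hq⟩
  | zero_left w _ => exact ⟨0, zero_mem _, fun _ _ _ _ η _ => by simp [intExtDer_zero]⟩
  | zero_right v _ => exact ⟨0, zero_mem _, fun _ _ _ _ η _ => by simp⟩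
  | add_left v v' w _ _ _ h h' =>
    obtain ⟨u, hu, e⟩ := h
    obtain ⟨u', hu', e'⟩ := h'
    exact ⟨u + u', add_mem hu hu', fun N hNU hN hq η hη => by
      rw [intExtDer_add, add_apply, e N hNU hN hq η hη, e' N hNU hN hq η hη, map_add]; ring⟩
  | add_right v w w' _ _ _ h h' =>
    obtain ⟨u, hu, e⟩ := h
    obtain ⟨u', hu', e'⟩ := h'
    exact ⟨u + u', add_mem hu hu', fun N hNU hN hq η hη => by
      rw [map_add, e N hNU hN hq η hη, e' N hNU hN hq η hη, map_add]; ring⟩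
  | smul_left c v w _ _ h =>
    obtain ⟨u, hu, e⟩ := h
    exact ⟨c • u, Submodule.smul_mem _ _ hu, fun N hNU hN hq η hη => by
      rw [intExtDer_smul, smul_apply, e N hNU hN hq η hη, map_smul, smul_neg]⟩
  | smul_right c v w _ _ h =>
    obtain ⟨u, hu, e⟩ := h
    exact ⟨c • u, Submodule.smul_mem _ _ hu, fun N hNU hN hq η hη => by
      rw [map_smul, e N hNU hN hq η hη, map_smul, smul_neg]⟩

end ExteriorDerivative

section Decomposable

variable {K V : Type*} [Field K] [AddCommGroup V] [Module K V]

lemma exists_forall_mem_eq_add_smul [FiniteDimensional K V] {L D : Submodule K V} (hLD : L ≤ D)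
    (hfinrank : Module.finrank K D ≤ Module.finrank K L + 1) :
    ∃ e, ∀ v ∈ D, ∃ l ∈ L, ∃ c : K, v = l + c • e := by
  by_cases hDL : D ≤ L
  · exact ⟨0, fun v hv => ⟨v, hDL hv, 0, by simp⟩⟩
  obtain ⟨e, heD, heL⟩ := SetLike.not_le_iff_exists.1 hDL
  have hlt : L < L ⊔ K ∙ e :=
    left_lt_sup.2 fun h => heL (h (Submodule.mem_span_singleton_self e))
  have hsup : L ⊔ K ∙ e = D :=
    Submodule.eq_of_le_of_finrank_le
      (sup_le hLD ((Submodule.span_singleton_le_iff_mem _ _).2 heD))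
      (hfinrank.trans (Submodule.finrank_lt_finrank_of_lt hlt))
  refine ⟨e, fun v hv => ?_⟩
  rw [← hsup] at hv
  obtain ⟨l, hl, y, hy, rfl⟩ := Submodule.mem_sup.1 hv
  obtain ⟨c, rfl⟩ := Submodule.mem_span_singleton.1 hy
  exact ⟨l, hl, c, rfl⟩

variable {n : ℕ}

/-- The exterior derivative of `η` at `q`, restricted to the subspace `D`, is a decomposable
two-form; the condition is expressed by the Plücker relation. -/
def IsDecomposableOn (η : OneForm n) (q : Fin n → ℝ) (D : Submodule ℝ (Fin n → ℝ)) : Prop :=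
  ∀ x ∈ D, ∀ y ∈ D, ∀ v ∈ D, ∀ w ∈ D,
    intExtDer η q x y * intExtDer η q v w - intExtDer η q x v * intExtDer η q y w
      + intExtDer η q x w * intExtDer η q y v = 0

lemma isDecomposableOn_of_isotropic {η : OneForm n} {q : Fin n → ℝ}
    {L D : Submodule ℝ (Fin n → ℝ)} (hLD : L ≤ D)
    (hfinrank : Module.finrank ℝ D ≤ Module.finrank ℝ L + 1)
    (hL : ∀ v ∈ L, ∀ w ∈ L, intExtDer η q v w = 0) : IsDecomposableOn η q D := by
  obtain ⟨e, hdecomp⟩ := exists_forall_mem_eq_add_smul hLD hfinrank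
  have hpair : ∀ a ∈ L, ∀ b ∈ L, ∀ c d : ℝ, intExtDer η q (a + c • e) (b + d • e) =
      d * intExtDer η q a e - c * intExtDer η q b e := by
    intro a ha b hb c d
    rw [intExtDer_add, intExtDer_smul, add_apply, smul_apply, map_add, map_add, map_smul, map_smul,
      hL a ha b hb, intExtDer_self, intExtDer_swap η q e b]
    simp only [smul_eq_mul]
    ring
  intro x hxD y hyD v hvD w hwD
  obtain ⟨x, hx, a, rfl⟩ := hdecomp x hxD
  obtain ⟨y, hy, b, rfl⟩ := hdecomp y hyD
  obtain ⟨v, hv, c, rfl⟩ := hdecomp v hvD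
  obtain ⟨w, hw, d, rfl⟩ := hdecomp w hwD
  rw [hpair x hx y hy, hpair v hv w hw, hpair x hx v hv, hpair y hy w hw, hpair x hx w hw,
    hpair y hy v hv]
  ring

end Decomposable

section Coframe

open scoped ContDiff

open Module (finrank)

lemma exists_dual_coframe {E ι : Type*} [NormedAddCommGroup E] [NormedSpace ℝ E]
    [FiniteDimensional ℝ E] [Fintype ι] [DecidableEq ι] {W : Set E} (hW : IsOpen W)
    {Z : ι → E → E} (hZ : ∀ i, ContDiffOn ℝ ∞ (Z i) W) {p : E} (hp : p ∈ W)
    (hli : LinearIndependent ℝ fun i => Z i p) (hcard : Fintype.card ι = finrank ℝ E) :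
    ∃ N ⊆ W, IsOpen N ∧ p ∈ N ∧ ∃ η : ι → E → E →L[ℝ] ℝ, (∀ i, ContDiffOn ℝ ∞ (η i) N) ∧
      ∀ q ∈ N, (∀ i j, η i q (Z j q) = Pi.single (M := fun _ => ℝ) j 1 i) ∧
        ∀ v, v = ∑ i, η i q v • Z i q := by
  have := FiniteDimensional.complete ℝ E
  let T : E → (ι → ℝ) →L[ℝ] E := fun q => ∑ i, (ContinuousLinearMap.proj i).smulRight (Z i q)
  have hT_apply : ∀ q c, T q c = ∑ i, c i • Z i q := fun q c => by simp [T, sum_apply]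
  have hT : ContDiffOn ℝ ∞ T W :=
    ContDiffOn.sum fun i _ => contDiffOn_const.smulRight (hZ i)
  have hinj : Function.Injective (T p) := by
    have := linearIndependent_iff_injective_fintypeLinearCombination.1 hli
    convert this using 1
    exact funext fun c => by rw [hT_apply, Fintype.linearCombination_apply]
  let invertible : Set ((ι → ℝ) →L[ℝ] E) := Set.range ((↑) : ((ι → ℝ) ≃L[ℝ] E) → _)
  have hTp : T p ∈ invertible :=
    ⟨(LinearMap.linearEquivOfInjective (T p).toLinearMap hinj
      (by rw [Module.finrank_fintype_fun_eq_card, hcard])).toContinuousLinearEquiv,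
      ContinuousLinearMap.ext fun _ => rfl⟩
  refine ⟨W ∩ T ⁻¹' invertible, Set.inter_subset_left,
    hT.continuousOn.isOpen_inter_preimage hW ContinuousLinearEquiv.isOpen, ⟨hp, hTp⟩,
    fun i q => (ContinuousLinearMap.proj i).comp (ContinuousLinearMap.inverse (T q)),
    fun i => contDiffOn_const.clm_comp ?_, ?_⟩
  · rintro x ⟨hxW, T', hT'⟩
    have hinv : ContDiffAt ℝ ∞ ContinuousLinearMap.inverse (T x) :=
      hT' ▸ contDiffAt_map_inverse T'
    exact (hinv.comp x (hT.contDiffAt (hW.mem_nhds hxW))).contDiffWithinAt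
  · rintro q ⟨-, T', hT'⟩
    have hZ_eq : ∀ j, Z j q = T' (Pi.single j 1) := fun j => by
      rw [← ContinuousLinearEquiv.coe_coe, hT', hT_apply]
      simp [Pi.single_apply]
    have hinverse : ContinuousLinearMap.inverse (T q) = T'.symm := by
      rw [← hT', ContinuousLinearMap.inverse_equiv]
    simp only [hinverse, ContinuousLinearMap.comp_apply, ContinuousLinearMap.proj_apply,
      ContinuousLinearEquiv.coe_coe]
    refine ⟨fun i j => by rw [hZ_eq, T'.symm_apply_apply], fun v => ?_⟩
    rw [← hT_apply, ← hT', ContinuousLinearEquiv.coe_coe, T'.apply_symm_apply]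

lemma exists_oneForm_ker_eq_evalSpan {n : ℕ} {W : Set (Fin n → ℝ)} (hW : IsOpen W)
    {A : Set (VF n)} (hA : ∀ X ∈ A, ContDiffOn ℝ ∞ X W) {p : Fin n → ℝ} (hp : p ∈ W)
    (hfinrank : ∀ q ∈ W, finrank ℝ (evalSpan A q) + 1 = n) :
    ∃ N ⊆ W, IsOpen N ∧ p ∈ N ∧ ∃ (η : OneForm n) (e : Fin n → ℝ), ContDiffOn ℝ ∞ η N ∧
      ∀ q ∈ N, η q e = 1 ∧ ∀ v, η q v = 0 ↔ v ∈ evalSpan A q := by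
  obtain ⟨b, hb, hspan, hli⟩ :=
    Submodule.exists_fun_fin_finrank_span_eq ℝ {w : Fin n → ℝ | ∃ X ∈ A, w = X p}
  choose Y hYA hYb using hb
  obtain ⟨e, he⟩ : ∃ e, e ∉ evalSpan A p := by
    by_contra! h
    have := hfinrank p hp
    rw [Submodule.eq_top_iff'.2 h, finrank_top, Module.finrank_fin_fun] at this
    lia
  obtain ⟨N, hNW, hN, hpN, η, hη, hdual⟩ := exists_dual_coframe hW
    (Z := Fin.cons (fun _ => e) Y) (Fin.forall_fin_succ.2 ⟨contDiffOn_const, fun i => hA _ (hYA i)⟩)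
    hp (by
      have hZ : (fun i => (Fin.cons (fun _ => e) Y : Fin _ → VF n) i p) = Fin.cons e b :=
        funext (Fin.cases rfl fun i => (hYb i).symm)
      rw [hZ, linearIndependent_finCons]
      exact ⟨hli, hspan.symm ▸ he⟩)
    (by rw [Fintype.card_fin, Module.finrank_fin_fun]; exact hfinrank p hp)
  refine ⟨N, hNW, hN, hpN, η 0, e, hη 0, fun q hq => ?_⟩
  have hηe : η 0 q e = 1 := by simpa using (hdual q hq).1 0 0
  have hker : LinearMap.ker (η 0 q).toLinearMap ≤ evalSpan A q := by
    intro v (hv : η 0 q v = 0)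
    rw [(hdual q hq).2 v, Fin.sum_univ_succ, hv, zero_smul, zero_add]
    exact Submodule.sum_mem _ fun i _ => Submodule.smul_mem _ _ (apply_mem_evalSpan (hYA i) q)
  have hker_eq : LinearMap.ker (η 0 q).toLinearMap = evalSpan A q :=
    Submodule.eq_of_le_of_finrank_le hker (by
      have hne : (η 0 q).toLinearMap ≠ 0 := fun h => one_ne_zero (hηe ▸ DFunLike.congr_fun h e)
      have := Module.Dual.finrank_ker_add_one_of_ne_zero hne
      rw [Module.finrank_fin_fun] at this
      have := hfinrank q (hNW hq)
      lia)
  exact ⟨hηe, fun v => hker_eq ▸ Iff.rfl⟩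

end Coframe

/-! ### The Darboux normal form of a one-form of class three -/

section Darboux

open scoped ContDiff

variable {n : ℕ} {N : Set (Fin n → ℝ)} {η : OneForm n} {e p q : Fin n → ℝ} {X Y : VF n}

/-- The one-form `η` defines a Pfaffian equation of class three on `N`: on `ker η` the two-form
`dη` is decomposable and nowhere zero, as witnessed by the sections `X` and `Y`. The constant vector
`e` normalizes `η`. -/
structure IsClassThreeOn (N : Set (Fin n → ℝ)) (η : OneForm n) (e : Fin n → ℝ) (X Y : VF n) :
    Prop where
  isOpen : IsOpen N
  contDiffOn_form : ContDiffOn ℝ ∞ η N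
  contDiffOn_left : ContDiffOn ℝ ∞ X N
  contDiffOn_right : ContDiffOn ℝ ∞ Y N
  apply_transversal : ∀ q ∈ N, η q e = 1
  apply_left : ∀ q ∈ N, η q (X q) = 0
  apply_right : ∀ q ∈ N, η q (Y q) = 0
  isDecomposableOn : ∀ q ∈ N, IsDecomposableOn η q (LinearMap.ker (η q).toLinearMap)
  intExtDer_ne_zero : ∀ q ∈ N, intExtDer η q (X q) (Y q) ≠ 0

/-- The triple `(η, ι_X dη, ι_Y dη)`, whose kernel is the Cauchy characteristic space of the
Pfaffian equation `η = 0` when the latter is of class three. -/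
noncomputable def characteristicMap (η : OneForm n) (X Y : VF n) (q : Fin n → ℝ) :
    (Fin n → ℝ) →L[ℝ] ℝ × ℝ × ℝ :=
  (η q).prod ((intExtDer η q (X q)).prod (intExtDer η q (Y q)))

lemma characteristicMap_eq_zero_iff {v : Fin n → ℝ} :
    characteristicMap η X Y q v = 0 ↔
      η q v = 0 ∧ intExtDer η q (X q) v = 0 ∧ intExtDer η q (Y q) v = 0 := by
  simp [characteristicMap, Prod.ext_iff]

namespace IsClassThreeOn

lemma mono (H : IsClassThreeOn N η e X Y) {N' : Set (Fin n → ℝ)} (hsub : N' ⊆ N)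
    (hN' : IsOpen N') : IsClassThreeOn N' η e X Y where
  isOpen := hN'
  contDiffOn_form := H.contDiffOn_form.mono hsub
  contDiffOn_left := H.contDiffOn_left.mono hsub
  contDiffOn_right := H.contDiffOn_right.mono hsub
  apply_transversal q hq := H.apply_transversal q (hsub hq)
  apply_left q hq := H.apply_left q (hsub hq)
  apply_right q hq := H.apply_right q (hsub hq)
  isDecomposableOn q hq := H.isDecomposableOn q (hsub hq)
  intExtDer_ne_zero q hq := H.intExtDer_ne_zero q (hsub hq)

lemma contDiffOn_characteristicMap (H : IsClassThreeOn N η e X Y) :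
    ContDiffOn ℝ ∞ (characteristicMap η X Y) N :=
  contDiffOn_clm_apply.2 fun _ => (H.contDiffOn_form.clm_apply contDiffOn_const).prodMk
    (((contDiffOn_intExtDer H.isOpen H.contDiffOn_form H.contDiffOn_left).clm_apply
      contDiffOn_const).prodMk
    ((contDiffOn_intExtDer H.isOpen H.contDiffOn_form H.contDiffOn_right).clm_apply
      contDiffOn_const))

lemma intExtDer_eq_zero_of_characteristic (H : IsClassThreeOn N η e X Y) (hq : q ∈ N)
    {v w : Fin n → ℝ} (hv : characteristicMap η X Y q v = 0) (hw : η q w = 0) :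
    intExtDer η q v w = 0 := by
  obtain ⟨hηv, hXv, hYv⟩ := characteristicMap_eq_zero_iff.1 hv
  have hplucker := H.isDecomposableOn q hq _ (H.apply_left q hq) _ (H.apply_right q hq) v hηv w hw
  rw [hXv, hYv, zero_mul, mul_zero, sub_zero, add_zero] at hplucker
  exact (mul_eq_zero.1 hplucker).resolve_left (H.intExtDer_ne_zero q hq)

lemma surjective_characteristicMap (H : IsClassThreeOn N η e X Y) (hq : q ∈ N) :
    Function.Surjective (characteristicMap η X Y q) := by
  rintro ⟨r, s, t⟩
  have hne := H.intExtDer_ne_zero q hq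
  refine ⟨r • e + ((s - r * intExtDer η q (X q) e) / intExtDer η q (X q) (Y q)) • Y q
    - ((t - r * intExtDer η q (Y q) e) / intExtDer η q (X q) (Y q)) • X q,
    Prod.ext ?_ (Prod.ext ?_ ?_)⟩
  · change η q _ = r
    simp only [map_sub, map_add, map_smul, H.apply_transversal q hq, H.apply_left q hq,
      H.apply_right q hq, smul_eq_mul]
    ring
  · change intExtDer η q (X q) _ = s
    simp only [map_sub, map_add, map_smul, intExtDer_self, smul_eq_mul]
    field_simp
    ring
  · change intExtDer η q (Y q) _ = t
    simp only [map_sub, map_add, map_smul, intExtDer_self, intExtDer_swap η q (Y q) (X q),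
      smul_eq_mul]
    field_simp
    ring

lemma apply_lieBracket_eq_zero_of_characteristic (H : IsClassThreeOn N η e X Y) {V T : VF n}
    (hV : ContDiffOn ℝ ∞ V N) (hT : ContDiffOn ℝ ∞ T N)
    (hV0 : ∀ x ∈ N, characteristicMap η X Y x (V x) = 0) (hT0 : ∀ x ∈ N, η x (T x) = 0)
    (hq : q ∈ N) : η q (lieBracket V T q) = 0 ∧ η q (lieBracket T V q) = 0 := by
  have hηV := fun x hx => (characteristicMap_eq_zero_iff.1 (hV0 x hx)).1
  have hVT := H.intExtDer_eq_zero_of_characteristic hq (hV0 q hq) (hT0 q hq)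
  exact ⟨apply_lieBracket_eq_zero H.isOpen H.contDiffOn_form hV hT hηV hT0 hq hVT,
    apply_lieBracket_eq_zero H.isOpen H.contDiffOn_form hT hV hT0 hηV hq
      (by rw [intExtDer_swap, hVT, neg_zero])⟩

/- By the Jacobi identity, `[T, [V, W]] = [[T, V], W] + [V, [T, W]]`, and both brackets on the right
pair a characteristic field with a section of `ker η`. -/
lemma intExtDer_lieBracket_eq_zero (H : IsClassThreeOn N η e X Y) {V W T : VF n}
    (hV : ContDiffOn ℝ ∞ V N) (hW : ContDiffOn ℝ ∞ W N) (hT : ContDiffOn ℝ ∞ T N)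
    (hV0 : ∀ x ∈ N, characteristicMap η X Y x (V x) = 0)
    (hW0 : ∀ x ∈ N, characteristicMap η X Y x (W x) = 0) (hT0 : ∀ x ∈ N, η x (T x) = 0)
    (hq : q ∈ N) : intExtDer η q (T q) (lieBracket V W q) = 0 := by
  have hηW := fun x hx => (characteristicMap_eq_zero_iff.1 (hW0 x hx)).1
  have hTV := fun x hx => (H.apply_lieBracket_eq_zero_of_characteristic hV hT hV0 hT0 (q := x) hx).2
  have hTW := fun x hx => (H.apply_lieBracket_eq_zero_of_characteristic hW hT hW0 hT0 (q := x) hx).2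
  have hVW := fun x hx =>
    (H.apply_lieBracket_eq_zero_of_characteristic hV hW hV0 hηW (q := x) hx).1
  rw [intExtDer_eq_neg_apply_lieBracket H.isOpen H.contDiffOn_form hT
    (contDiffOn_lieBracket H.isOpen hV hW) hT0 hVW hq,
    lieBracket_lieBracket H.isOpen hT hV hW hq, map_add,
    (H.apply_lieBracket_eq_zero_of_characteristic hW (contDiffOn_lieBracket H.isOpen hT hV) hW0
      hTV hq).2,
    (H.apply_lieBracket_eq_zero_of_characteristic hV (contDiffOn_lieBracket H.isOpen hT hW) hV0
      hTW hq).1, add_zero, neg_zero]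

lemma hasInvolutiveKer_characteristicMap (H : IsClassThreeOn N η e X Y) :
    HasInvolutiveKer (characteristicMap η X Y) N := by
  intro M hMN hM V W hV hW hV0 hW0 x hx
  have HM := H.mono hMN hM
  have hηW := fun x hx => (characteristicMap_eq_zero_iff.1 (hW0 x hx)).1
  exact characteristicMap_eq_zero_iff.2
    ⟨(HM.apply_lieBracket_eq_zero_of_characteristic hV hW hV0 hηW hx).1,
      HM.intExtDer_lieBracket_eq_zero hV hW HM.contDiffOn_left hV0 hW0 HM.apply_left hx,
      HM.intExtDer_lieBracket_eq_zero hV hW HM.contDiffOn_right hV0 hW0 HM.apply_right hx⟩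

lemma exists_first_integral (H : IsClassThreeOn N η e X Y) (hp : p ∈ N) :
    ∃ N' ⊆ N, IsOpen N' ∧ p ∈ N' ∧ ∃ h : (Fin n → ℝ) → ℝ, ContDiffOn ℝ ∞ h N' ∧
      ∀ q ∈ N', fderiv ℝ h q (Y q) ≠ 0 ∧
        ∀ v, characteristicMap η X Y q v = 0 → fderiv ℝ h q v = 0 := by
  obtain ⟨N', hN'N, hN', hpN', I, hI, hIp, hIker⟩ := exists_firstIntegral_of_hasInvolutiveKer
    H.isOpen H.contDiffOn_characteristicMap hp (H.surjective_characteristicMap hp)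
    H.hasInvolutiveKer_characteristicMap
  let h : (Fin n → ℝ) → ℝ := fun x => (I x).2.1
  have hh : ContDiffOn ℝ ∞ h N' := (contDiff_fst.comp contDiff_snd).comp_contDiffOn hI
  have hdh : ∀ x ∈ N', ∀ v, fderiv ℝ h x v = (fderiv ℝ I x v).2.1 := fun x hx v =>
    DFunLike.congr_fun (HasFDerivAt.fderiv (f := h)
      (differentiableAt_of_contDiffOn_isOpen hI hN' hx).hasFDerivAt.snd.fst) v
  have hdhY : ContDiffOn ℝ ∞ (fun x => fderiv ℝ h x (Y x)) N' :=
    (hh.fderiv_of_isOpen hN' (by simp)).clm_apply (H.contDiffOn_right.mono hN'N)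
  refine ⟨N' ∩ (fun x => fderiv ℝ h x (Y x)) ⁻¹' {0}ᶜ, fun q hq => hN'N hq.1,
    hdhY.continuousOn.isOpen_inter_preimage hN' isOpen_compl_singleton, ⟨hpN', ?_⟩, h,
    hh.mono Set.inter_subset_left, fun q hq => ⟨hq.2, fun v hv => ?_⟩⟩
  · rw [Set.mem_preimage, hdh p hpN', hIp]
    exact H.intExtDer_ne_zero p hp
  · rw [hdh q hq.1, hIker q hq.1 v hv]
    rfl

/- The vector `dη(v, w) Y + dη(w, Y) v + dη(Y, v) w` is characteristic, by the Plücker relation, and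
`dh` maps it to `dη(v, w) dh(Y)`. -/
lemma intExtDer_eq_zero_of_fderiv_eq_zero (H : IsClassThreeOn N η e X Y) {h : (Fin n → ℝ) → ℝ}
    (hq : q ∈ N) (hY : fderiv ℝ h q (Y q) ≠ 0)
    (hker : ∀ v, characteristicMap η X Y q v = 0 → fderiv ℝ h q v = 0) {v w : Fin n → ℝ}
    (hηv : η q v = 0) (hηw : η q w = 0) (hhv : fderiv ℝ h q v = 0) (hhw : fderiv ℝ h q w = 0) :
    intExtDer η q v w = 0 := by
  have hchar : characteristicMap η X Y q (intExtDer η q v w • Y q + intExtDer η q w (Y q) • v +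
      intExtDer η q (Y q) v • w) = 0 := by
    have hplucker :=
      H.isDecomposableOn q hq _ (H.apply_left q hq) _ (H.apply_right q hq) v hηv w hηw
    refine characteristicMap_eq_zero_iff.2 ⟨?_, ?_, ?_⟩
    · simp [hηv, hηw, H.apply_right q hq]
    · simp only [map_add, map_smul, smul_eq_mul, intExtDer_swap η q w (Y q)]
      linarith
    · simp only [map_add, map_smul, smul_eq_mul, intExtDer_self, intExtDer_swap η q w (Y q)]
      ring
  have hzero := hker _ hchar
  simp only [map_add, map_smul, smul_eq_mul, hhv, hhw, mul_zero, add_zero] at hzero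
  exact (mul_eq_zero.1 hzero).resolve_right hY

lemma hasInvolutiveKer_prod_fderiv (H : IsClassThreeOn N η e X Y) {h : (Fin n → ℝ) → ℝ}
    (hh : ContDiffOn ℝ ∞ h N) (hY : ∀ q ∈ N, fderiv ℝ h q (Y q) ≠ 0)
    (hker : ∀ q ∈ N, ∀ v, characteristicMap η X Y q v = 0 → fderiv ℝ h q v = 0) :
    HasInvolutiveKer (fun q => (η q).prod (fderiv ℝ h q)) N := by
  intro M hMN hM V W hV hW hV0 hW0 x hx
  have hVη : ∀ q ∈ M, η q (V q) = 0 := fun q hq => congrArg Prod.fst (hV0 q hq)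
  have hWη : ∀ q ∈ M, η q (W q) = 0 := fun q hq => congrArg Prod.fst (hW0 q hq)
  have hVh : ∀ q ∈ M, fderiv ℝ h q (V q) = 0 := fun q hq => congrArg Prod.snd (hV0 q hq)
  have hWh : ∀ q ∈ M, fderiv ℝ h q (W q) = 0 := fun q hq => congrArg Prod.snd (hW0 q hq)
  have hhM := hh.mono hMN
  refine Prod.ext ?_ ?_
  · exact apply_lieBracket_eq_zero hM (H.contDiffOn_form.mono hMN) hV hW hVη hWη hx
      (H.intExtDer_eq_zero_of_fderiv_eq_zero (hMN hx) (hY x (hMN hx)) (hker x (hMN hx))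
        (hVη x hx) (hWη x hx) (hVh x hx) (hWh x hx))
  · exact apply_lieBracket_eq_zero hM (hhM.fderiv_of_isOpen hM (by simp)) hV hW hVh hWh hx
      (intExtDer_fderiv hM hhM hx _ _)

lemma surjective_prod_fderiv (H : IsClassThreeOn N η e X Y) {h : (Fin n → ℝ) → ℝ} (hq : q ∈ N)
    (hY : fderiv ℝ h q (Y q) ≠ 0) : Function.Surjective ((η q).prod (fderiv ℝ h q)) := by
  rintro ⟨r, s⟩
  refine ⟨r • e + ((s - r * fderiv ℝ h q e) / fderiv ℝ h q (Y q)) • Y q, Prod.ext ?_ ?_⟩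
  · change η q _ = r
    simp [H.apply_transversal q hq, H.apply_right q hq]
  · change fderiv ℝ h q _ = s
    simp only [map_add, map_smul, smul_eq_mul]
    field_simp
    ring

lemma exists_second_integral (H : IsClassThreeOn N η e X Y) (hp : p ∈ N) {h : (Fin n → ℝ) → ℝ}
    (hh : ContDiffOn ℝ ∞ h N) (hY : ∀ q ∈ N, fderiv ℝ h q (Y q) ≠ 0)
    (hker : ∀ q ∈ N, ∀ v, characteristicMap η X Y q v = 0 → fderiv ℝ h q v = 0) :
    ∃ N' ⊆ N, IsOpen N' ∧ p ∈ N' ∧ ∃ z : (Fin n → ℝ) → ℝ, ContDiffOn ℝ ∞ z N' ∧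
      fderiv ℝ z p = η p ∧
      ∀ q ∈ N', ∀ v, η q v = 0 → fderiv ℝ h q v = 0 → fderiv ℝ z q v = 0 := by
  obtain ⟨N', hN'N, hN', hpN', I, hI, hIp, hIker⟩ := exists_firstIntegral_of_hasInvolutiveKer
    H.isOpen (contDiffOn_clm_apply.2 fun _ => (H.contDiffOn_form.clm_apply contDiffOn_const).prodMk
      ((hh.fderiv_of_isOpen H.isOpen (by simp)).clm_apply contDiffOn_const)) hp
    (H.surjective_prod_fderiv hp (hY p hp)) (H.hasInvolutiveKer_prod_fderiv hh hY hker)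
  have hdz : ∀ x ∈ N', ∀ v, fderiv ℝ (fun x => (I x).1) x v = (fderiv ℝ I x v).1 := fun x hx v =>
    DFunLike.congr_fun
      (differentiableAt_of_contDiffOn_isOpen hI hN' hx).hasFDerivAt.fst.fderiv v
  refine ⟨N', hN'N, hN', hpN', fun x => (I x).1, contDiff_fst.comp_contDiffOn hI,
    ContinuousLinearMap.ext fun v => ?_, fun q hq v hηv hhv => ?_⟩
  · rw [hdz p hpN', hIp]
    rfl
  · rw [hdz q hq, hIker q hq v (Prod.ext hηv hhv)]
    rfl

theorem exists_darboux (H : IsClassThreeOn N η e X Y) (hp : p ∈ N) :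
    ∃ N' ⊆ N, IsOpen N' ∧ p ∈ N' ∧ ∃ h z : (Fin n → ℝ) → ℝ,
      ContDiffOn ℝ ∞ h N' ∧ ContDiffOn ℝ ∞ z N' ∧ ∀ q ∈ N', fderiv ℝ h q (Y q) ≠ 0 ∧
        ∃ c : ℝ, c ≠ 0 ∧
          fderiv ℝ z q - (fderiv ℝ z q (Y q) / fderiv ℝ h q (Y q)) • fderiv ℝ h q = c • η q := by
  obtain ⟨N₁, hN₁N, hN₁, hpN₁, h, hh, hprop⟩ := H.exists_first_integral hp
  have H₁ := H.mono hN₁N hN₁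
  obtain ⟨N₂, hN₂N₁, hN₂, hpN₂, z, hz, hzp, hzker⟩ := H₁.exists_second_integral hpN₁ hh
    (fun q hq => (hprop q hq).1) (fun q hq => (hprop q hq).2)
  have H₂ := H₁.mono hN₂N₁ hN₂
  have hdh := (hh.mono hN₂N₁).fderiv_of_isOpen hN₂ (m := ∞) (by simp)
  have hdz := hz.fderiv_of_isOpen hN₂ (m := ∞) (by simp)
  let ξ : OneForm n := fun q =>
    fderiv ℝ z q - (fderiv ℝ z q (Y q) / fderiv ℝ h q (Y q)) • fderiv ℝ h q
  have hξ : ContDiffOn ℝ ∞ ξ N₂ := hdz.sub (((hdz.clm_apply H₂.contDiffOn_right).div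
    (hdh.clm_apply H₂.contDiffOn_right) fun q hq => (hprop q (hN₂N₁ hq)).1).smul hdh)
  have hξker : ∀ q ∈ N₂, ∀ v, η q v = 0 → ξ q v = 0 := fun q hq v hηv => by
    have hY := (hprop q (hN₂N₁ hq)).1
    have hker := hzker q hq (v - (fderiv ℝ h q v / fderiv ℝ h q (Y q)) • Y q)
      (by simp [hηv, H₂.apply_right q hq])
      (by rw [map_sub, map_smul, smul_eq_mul, div_mul_cancel₀ _ hY, sub_self])
    rw [map_sub, map_smul, smul_eq_mul] at hker
    simp only [ξ, sub_apply, smul_apply, smul_eq_mul]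
    linear_combination hker
  have hξp : ξ p = η p := by simp [ξ, hzp, H₂.apply_right p hpN₂]
  refine ⟨N₂ ∩ (fun q => ξ q e) ⁻¹' {0}ᶜ, fun q hq => hN₁N (hN₂N₁ hq.1),
    (hξ.clm_apply contDiffOn_const).continuousOn.isOpen_inter_preimage hN₂ isOpen_compl_singleton,
    ⟨hpN₂, ?_⟩, h, z, hh.mono fun q hq => hN₂N₁ hq.1, hz.mono Set.inter_subset_left,
    fun q hq => ⟨(hprop q (hN₂N₁ hq.1)).1, ξ q e, hq.2, ContinuousLinearMap.ext fun v => ?_⟩⟩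
  · rw [Set.mem_preimage, hξp, H₂.apply_transversal p hpN₂]
    exact one_ne_zero
  · have hker := hξker q hq.1 (v - η q v • e) (by simp [H₂.apply_transversal q hq.1])
    rw [map_sub, map_smul, sub_eq_zero, smul_eq_mul] at hker
    rw [smul_apply, smul_eq_mul, mul_comm]
    exact hker

end IsClassThreeOn

end Darboux

/-! ### Goursat distributions -/

section Goursat

open scoped ContDiff

open Module (finrank)

variable {n : ℕ} {U W N : Set (Fin n → ℝ)} {Δ : Set (VF n)} {η : OneForm n} {p q : Fin n → ℝ}
  {k : ℕ}

lemma isDecomposableOn_of_finrank_eq_two {D : Submodule ℝ (Fin n → ℝ)} (hD : finrank ℝ D = 2) :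
    IsDecomposableOn η q D := by
  have : Nontrivial D := Module.nontrivial_of_finrank_eq_succ hD
  obtain ⟨⟨v, hvD⟩, hv⟩ := exists_ne (0 : D)
  refine isDecomposableOn_of_isotropic ((Submodule.span_singleton_le_iff_mem v D).2 hvD) ?_ ?_
  · rw [hD, finrank_span_singleton fun h => hv (Subtype.ext h)]
  · intro a ha b hb
    obtain ⟨s, rfl⟩ := Submodule.mem_span_singleton.1 ha
    obtain ⟨t, rfl⟩ := Submodule.mem_span_singleton.1 hb
    rw [intExtDer_smul, map_smul, smul_apply, intExtDer_self, smul_zero, smul_zero]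

lemma exists_intExtDer_ne_zero (hU : IsOpen U) (hΔ : ∀ X ∈ Δ, ContDiffOn ℝ ∞ X U) (hN : IsOpen N)
    (hNU : N ⊆ U) (hp : p ∈ N) (hη : η ∈ annihilatorOn N (derivedFlag U Δ k)) (hηp : η p ≠ 0)
    (htop : evalSpan (lieFlag U Δ (k + 1)) p = ⊤) :
    ∃ X ∈ derivedFlag U Δ k, ∃ Y ∈ Δ, intExtDer η p (X p) (Y p) ≠ 0 := by
  by_contra! hzero
  have hsmooth : ∀ X ∈ derivedFlag U Δ k, ContDiffOn ℝ ∞ X N := fun X hX =>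
    (contDiffOn_of_mem_derivedFlag hU hΔ k X hX).mono hNU
  have hkill : ∀ X ∈ lieFlag U Δ (k + 1), η p (X p) = 0 := by
    refine apply_eq_zero_of_mem_lieFlag_succ (hNU hp)
      (fun X hX => hη.2 X (lieFlag_subset_derivedFlag k hX) p hp) fun X hX Y hY => ?_
    have hX := lieFlag_subset_derivedFlag k hX
    have hYk := subset_derivedFlag (U := U) k hY
    exact apply_lieBracket_eq_zero hN hη.1 (hsmooth X hX) (hsmooth Y hYk) (hη.2 X hX) (hη.2 Y hYk)
      hp (hzero X hX Y hY)
  exact hηp <| ContinuousLinearMap.ext fun v =>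
    apply_eq_zero_of_mem_evalSpan hkill (htop ▸ Submodule.mem_top)

/-- The distribution `Δ` on `U` is a Goursat distribution on `W`: its derived flag starts with a
plane field and gains exactly one dimension at each step until it fills the tangent space. -/
structure IsGoursatOn (U W : Set (Fin n → ℝ)) (Δ : Set (VF n)) : Prop where
  two_le : 2 ≤ n
  isOpen_ambient : IsOpen U
  isOpen : IsOpen W
  subset : W ⊆ U
  contDiffOn : ∀ X ∈ Δ, ContDiffOn ℝ ∞ X U
  zero_mem : 0 ∈ Δ
  finrank_derivedFlag :
    ∀ k, k + 2 ≤ n → ∀ q ∈ W, finrank ℝ (evalSpan (derivedFlag U Δ k) q) = 2 + k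

namespace IsGoursatOn

lemma mono (G : IsGoursatOn U W Δ) (hNW : N ⊆ W) (hN : IsOpen N) : IsGoursatOn U N Δ :=
  { G with
    isOpen := hN
    subset := hNW.trans G.subset
    finrank_derivedFlag := fun k hk q hq => G.finrank_derivedFlag k hk q (hNW hq) }

lemma contDiffOn_of_mem_derivedFlag (G : IsGoursatOn U W Δ) {X : VF n}
    (hX : X ∈ derivedFlag U Δ k) : ContDiffOn ℝ ∞ X W :=
  (_root_.contDiffOn_of_mem_derivedFlag G.isOpen_ambient G.contDiffOn k X hX).mono G.subset

lemma evalSpan_derivedFlag_eq_top (G : IsGoursatOn U W Δ) (hq : q ∈ W) :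
    evalSpan (derivedFlag U Δ (n - 2)) q = ⊤ := by
  have hn := G.two_le
  refine Submodule.eq_top_of_finrank_eq ?_
  rw [G.finrank_derivedFlag (n - 2) (by lia) q hq, Module.finrank_fin_fun]
  lia

lemma exists_apply_ne_zero (G : IsGoursatOn U W Δ) (hp : p ∈ W) : ∃ Y ∈ Δ, Y p ≠ 0 := by
  by_contra! hzero
  have hbot : evalSpan Δ p = ⊥ :=
    Submodule.span_eq_bot.2 fun _ ⟨X, hX, hw⟩ => hw.trans (hzero X hX)
  have hfinrank : finrank ℝ (evalSpan Δ p) = 2 := G.finrank_derivedFlag 0 G.two_le p hp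
  rw [hbot, finrank_bot] at hfinrank
  lia

/- For `k > 0` the previous step of the flag is an isotropic hyperplane of `G_k`. -/
lemma isDecomposableOn_derivedFlag (G : IsGoursatOn U W Δ) (hk : k + 2 ≤ n)
    (hη : η ∈ annihilatorOn W (derivedFlag U Δ k)) (hq : q ∈ W) :
    IsDecomposableOn η q (evalSpan (derivedFlag U Δ k) q) := by
  obtain _ | k := k
  · exact isDecomposableOn_of_finrank_eq_two (G.finrank_derivedFlag 0 hk q hq)
  · have hmono : derivedFlag U Δ k ⊆ derivedFlag U Δ (k + 1) := derivedFlag_mono k.le_succ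
    refine isDecomposableOn_of_isotropic (evalSpan_mono hmono q) ?_ fun v hv w hw => ?_
    · rw [G.finrank_derivedFlag _ hk q hq, G.finrank_derivedFlag k (by lia) q hq]
      lia
    · obtain ⟨u, hu, hvw⟩ := exists_mem_evalSpan_intExtDer_eq_neg G.isOpen_ambient G.contDiffOn
        G.zero_mem hv hw
      rw [hvw W G.subset G.isOpen hq η ⟨hη.1, fun X hX => hη.2 X (hmono hX)⟩,
        apply_eq_zero_of_mem_evalSpan (fun X hX => hη.2 X hX q hq) hu, neg_zero]

lemma exists_isClassThreeOn (G : IsGoursatOn U W Δ) (hk : k + 3 = n) (hp : p ∈ W)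
    (htop : evalSpan (lieFlag U Δ (k + 1)) p = ⊤) :
    ∃ N ⊆ W, p ∈ N ∧ ∃ η e X, ∃ Y ∈ Δ, IsClassThreeOn N η e X Y ∧
      η ∈ annihilatorOn N (derivedFlag U Δ k) := by
  obtain ⟨M, hMW, hM, hpM, η, e, hη, hker⟩ := exists_oneForm_ker_eq_evalSpan G.isOpen
    (fun X hX => G.contDiffOn_of_mem_derivedFlag (k := k) hX) hp
    (fun q hq => by rw [G.finrank_derivedFlag k (by lia) q hq]; lia)
  have GM := G.mono hMW hM
  have hηann : η ∈ annihilatorOn M (derivedFlag U Δ k) :=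
    ⟨hη, fun X hX q hq => ((hker q hq).2 _).2 (apply_mem_evalSpan hX q)⟩
  obtain ⟨X, hX, Y, hY, hXY⟩ := exists_intExtDer_ne_zero GM.isOpen_ambient GM.contDiffOn hM
    GM.subset hpM hηann (fun h => by simpa [h] using (hker p hpM).1) htop
  have hYk := subset_derivedFlag (U := U) k hY
  have hsX := GM.contDiffOn_of_mem_derivedFlag hX
  have hsY := GM.contDiffOn_of_mem_derivedFlag hYk
  let N := M ∩ (fun q => intExtDer η q (X q) (Y q)) ⁻¹' {0}ᶜ
  have hNM : N ⊆ M := Set.inter_subset_left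
  refine ⟨N, hNM.trans hMW, ⟨hpM, hXY⟩, η, e, X, Y, hY,
    { isOpen := ((contDiffOn_intExtDer hM hη hsX).clm_apply hsY).continuousOn.isOpen_inter_preimage
        hM isOpen_compl_singleton
      contDiffOn_form := hη.mono hNM
      contDiffOn_left := hsX.mono hNM
      contDiffOn_right := hsY.mono hNM
      apply_transversal := fun q hq => (hker q (hNM hq)).1
      apply_left := fun q hq => hηann.2 X hX q (hNM hq)
      apply_right := fun q hq => hηann.2 Y hYk q (hNM hq)
      isDecomposableOn := fun q hq => ?_
      intExtDer_ne_zero := fun q hq => hq.2 },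
    hη.mono hNM, fun X hX q hq => hηann.2 X hX q (hNM hq)⟩
  have hker_eq : LinearMap.ker (η q).toLinearMap = evalSpan (derivedFlag U Δ k) q :=
    Submodule.ext (hker q (hNM hq)).2
  exact hker_eq ▸ GM.isDecomposableOn_derivedFlag (by lia) hηann (hNM hq)

end IsGoursatOn

end Goursat

/-! ### The chain of coordinates generated by a Darboux normal form -/

section Chain

open scoped ContDiff

open Module (finrank)

variable {n : ℕ} {U W N : Set (Fin n → ℝ)} {Δ : Set (VF n)} {Y : VF n} {h z : (Fin n → ℝ) → ℝ}
  {p q v : Fin n → ℝ}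

/-- The functions `z₀ = z` and `z_{m+1} = Y z_m / Y h`: the successive derivatives of `z` along `Y`,
with `h` as the time parameter. -/
noncomputable def chainCoord (Y : VF n) (h z : (Fin n → ℝ) → ℝ) : ℕ → (Fin n → ℝ) → ℝ
  | 0 => z
  | m + 1 => fun x => fderiv ℝ (chainCoord Y h z m) x (Y x) / fderiv ℝ h x (Y x)

/-- The contact form `dz_m - z_{m+1} dh`. -/
noncomputable def chainForm (Y : VF n) (h z : (Fin n → ℝ) → ℝ) (m : ℕ) : OneForm n :=
  fun x => fderiv ℝ (chainCoord Y h z m) x - chainCoord Y h z (m + 1) x • fderiv ℝ h x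

lemma chainForm_apply (m : ℕ) (q v : Fin n → ℝ) : chainForm Y h z m q v =
    fderiv ℝ (chainCoord Y h z m) q v - chainCoord Y h z (m + 1) q * fderiv ℝ h q v := rfl

/-- The functions `h` and `z` generate a chain of coordinates adapted to the Goursat distribution
`Δ`: the contact form `dz - z₁ dh` vanishes nowhere and annihilates the last proper member of the
derived flag (a void condition if `n = 2`). -/
structure IsChainOn (U N : Set (Fin n → ℝ)) (Δ : Set (VF n)) (Y : VF n)
    (h z : (Fin n → ℝ) → ℝ) : Prop extends IsGoursatOn U N Δ where
  mem : Y ∈ Δ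
  contDiffOn_time : ContDiffOn ℝ ∞ h N
  contDiffOn_top : ContDiffOn ℝ ∞ z N
  fderiv_time_ne_zero : ∀ q ∈ N, fderiv ℝ h q (Y q) ≠ 0
  chainForm_zero_ne_zero : ∀ q ∈ N, chainForm Y h z 0 q ≠ 0
  chainForm_zero_apply :
    3 ≤ n → ∀ X ∈ derivedFlag U Δ (n - 3), ∀ q ∈ N, chainForm Y h z 0 q (X q) = 0

lemma IsGoursatOn.exists_isChainOn_of_three_le (G : IsGoursatOn U W Δ) (hn : 3 ≤ n) (hp : p ∈ W)
    (htop : evalSpan (lieFlag U Δ (n - 2)) p = ⊤) :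
    ∃ N ⊆ W, p ∈ N ∧ ∃ Y h z, IsChainOn U N Δ Y h z := by
  obtain ⟨M, hMW, hpM, η, e, X, Y, hY, H, hη⟩ := G.exists_isClassThreeOn (k := n - 3) (by lia) hp
    (by rwa [show n - 3 + 1 = n - 2 by lia])
  obtain ⟨N, hNM, hN, hpN, h, z, hh, hz, hdarboux⟩ := H.exists_darboux hpM
  refine ⟨N, hNM.trans hMW, hpN, Y, h, z, { G.mono (hNM.trans hMW) hN with
    mem := hY
    contDiffOn_time := hh
    contDiffOn_top := hz
    fderiv_time_ne_zero := fun q hq => (hdarboux q hq).1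
    chainForm_zero_ne_zero := fun q hq => ?_
    chainForm_zero_apply := fun _ X hX q hq => ?_ }⟩
  all_goals obtain ⟨-, c, hc, hform⟩ := hdarboux q hq
  · have hηq : η q ≠ 0 := fun h => by simpa [h] using H.apply_transversal q (hNM hq)
    exact fun h => smul_ne_zero hc hηq (hform.symm.trans h)
  · refine (DFunLike.congr_fun hform (X q)).trans ?_
    rw [smul_apply, hη.2 X hX q (hNM hq), smul_zero]

lemma IsGoursatOn.exists_isChainOn_of_lt_three (G : IsGoursatOn U W Δ) (hn : n < 3) (hp : p ∈ W) :
    ∃ N ⊆ W, p ∈ N ∧ ∃ Y h z, IsChainOn U N Δ Y h z := by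
  obtain ⟨Y, hY, hYp⟩ := G.exists_apply_ne_zero hp
  obtain ⟨i, hi⟩ := Function.ne_iff.1 hYp
  have : Nontrivial (Fin n) := Fin.nontrivial_iff_two_le.2 G.two_le
  obtain ⟨j, hji⟩ := exists_ne i
  have hproj : ∀ (i : Fin n) (q v : Fin n → ℝ), fderiv ℝ (fun x : Fin n → ℝ => x i) q v = v i :=
    fun i q v => DFunLike.congr_fun (hasFDerivAt_apply i q).fderiv v
  have hYi : ContDiffOn ℝ ∞ (fun x => Y x i) W :=
    contDiffOn_pi.1 ((G.contDiffOn Y hY).mono G.subset) i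
  refine ⟨W ∩ (fun x => Y x i) ⁻¹' {0}ᶜ, Set.inter_subset_left, ⟨hp, hi⟩, Y, fun x => x i,
    fun x => x j, { G.mono Set.inter_subset_left
        (hYi.continuousOn.isOpen_inter_preimage G.isOpen isOpen_compl_singleton) with
      mem := hY
      contDiffOn_time := (contDiff_apply ℝ ℝ i).contDiffOn
      contDiffOn_top := (contDiff_apply ℝ ℝ j).contDiffOn
      fderiv_time_ne_zero := fun q hq => by rw [hproj]; exact hq.2
      chainForm_zero_ne_zero := fun q _ h => ?_
      chainForm_zero_apply := fun h3 => absurd h3 (by lia) }⟩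
  have hj : chainForm Y (fun x => x i) (fun x => x j) 0 q (Pi.single j 1) = 1 := by
    rw [chainForm_apply, hproj, Pi.single_eq_of_ne hji.symm, mul_zero, sub_zero]
    exact (hproj j q _).trans (Pi.single_eq_same j 1)
  exact one_ne_zero (hj.symm.trans (DFunLike.congr_fun h _))

lemma IsGoursatOn.exists_isChainOn (G : IsGoursatOn U W Δ) (hp : p ∈ W)
    (htop : evalSpan (lieFlag U Δ (n - 2)) p = ⊤) :
    ∃ N ⊆ W, p ∈ N ∧ ∃ Y h z, IsChainOn U N Δ Y h z :=
  (Nat.lt_or_ge n 3).elim (G.exists_isChainOn_of_lt_three · hp)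
    (G.exists_isChainOn_of_three_le · hp htop)

namespace IsChainOn

lemma contDiffOn_direction (C : IsChainOn U N Δ Y h z) : ContDiffOn ℝ ∞ Y N :=
  (C.contDiffOn Y C.mem).mono C.subset

lemma contDiffOn_fderiv_time (C : IsChainOn U N Δ Y h z) : ContDiffOn ℝ ∞ (fderiv ℝ h) N :=
  C.contDiffOn_time.fderiv_of_isOpen C.isOpen (by simp)

lemma contDiffOn_chainCoord (C : IsChainOn U N Δ Y h z) (m : ℕ) :
    ContDiffOn ℝ ∞ (chainCoord Y h z m) N := by
  induction m with
  | zero => exact C.contDiffOn_top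
  | succ m ih =>
    exact ((ih.fderiv_of_isOpen C.isOpen (by simp)).clm_apply C.contDiffOn_direction).div
      (C.contDiffOn_fderiv_time.clm_apply C.contDiffOn_direction) C.fderiv_time_ne_zero

lemma contDiffOn_fderiv_chainCoord (C : IsChainOn U N Δ Y h z) (m : ℕ) :
    ContDiffOn ℝ ∞ (fderiv ℝ (chainCoord Y h z m)) N :=
  (C.contDiffOn_chainCoord m).fderiv_of_isOpen C.isOpen (by simp)

lemma contDiffOn_chainForm (C : IsChainOn U N Δ Y h z) (m : ℕ) :
    ContDiffOn ℝ ∞ (chainForm Y h z m) N :=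
  (C.contDiffOn_fderiv_chainCoord m).sub
    ((C.contDiffOn_chainCoord (m + 1)).smul C.contDiffOn_fderiv_time)

lemma fderiv_chainCoord_direction (C : IsChainOn U N Δ Y h z) (m : ℕ) (hq : q ∈ N) :
    fderiv ℝ (chainCoord Y h z m) q (Y q) =
      chainCoord Y h z (m + 1) q * fderiv ℝ h q (Y q) :=
  (div_mul_cancel₀ _ (C.fderiv_time_ne_zero q hq)).symm

lemma chainForm_direction (C : IsChainOn U N Δ Y h z) (m : ℕ) (hq : q ∈ N) :
    chainForm Y h z m q (Y q) = 0 := by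
  rw [chainForm_apply, C.fderiv_chainCoord_direction m hq, sub_self]

lemma intExtDer_chainForm (C : IsChainOn U N Δ Y h z) (m : ℕ) (hq : q ∈ N) (v w : Fin n → ℝ) :
    intExtDer (chainForm Y h z m) q v w =
      fderiv ℝ h q v * chainForm Y h z (m + 1) q w -
        fderiv ℝ h q w * chainForm Y h z (m + 1) q v := by
  have hd {F : Type} [NormedAddCommGroup F] [NormedSpace ℝ F] {a : (Fin n → ℝ) → F}
      (ha : ContDiffOn ℝ ∞ a N) : HasFDerivAt a (fderiv ℝ a q) q :=
    (differentiableAt_of_contDiffOn_isOpen ha C.isOpen hq).hasFDerivAt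
  have hform : HasFDerivAt (chainForm Y h z m) _ q :=
    (hd (C.contDiffOn_fderiv_chainCoord m)).sub
      ((hd (C.contDiffOn_chainCoord (m + 1))).smul (hd C.contDiffOn_fderiv_time))
  have hsymm := intExtDer_fderiv C.isOpen (C.contDiffOn_chainCoord m) hq v w
  have hsymm_time := intExtDer_fderiv C.isOpen C.contDiffOn_time hq v w
  rw [intExtDer_apply] at hsymm hsymm_time ⊢
  rw [hform.fderiv, chainForm_apply, chainForm_apply]
  simp only [sub_apply, add_apply, smul_apply, ContinuousLinearMap.smulRight_apply, smul_eq_mul]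
  linear_combination hsymm - chainCoord Y h z (m + 1) q * hsymm_time

/- Pairing `dη_m = dh ∧ η_{m+1}` with `X ∈ G_k` and `Y` gives
`-dh(Y) η_{m+1}(X) = -η_m([X, Y])`, which vanishes because `[X, Y] ∈ G_{k+1}`. -/
lemma chainForm_mem_annihilatorOn (C : IsChainOn U N Δ Y h z) {m k : ℕ} (hk : k + m + 3 ≤ n) :
    chainForm Y h z m ∈ annihilatorOn N (derivedFlag U Δ k) := by
  refine ⟨C.contDiffOn_chainForm m, ?_⟩
  induction m generalizing k with
  | zero =>
    exact fun X hX => C.chainForm_zero_apply (by lia) X (derivedFlag_mono (by lia) hX)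
  | succ m ih =>
    intro X hX q hq
    have hcartan := intExtDer_eq_neg_apply_lieBracket C.isOpen (C.contDiffOn_chainForm m)
      (C.contDiffOn_of_mem_derivedFlag hX) C.contDiffOn_direction (ih (by lia) X hX)
      (fun x hx => C.chainForm_direction m hx) hq
    rw [ih (k := k + 1) (by lia) _ (lieBracket_mem_derivedFlag_succ C.zero_mem hX
      (subset_derivedFlag k C.mem)) q hq, C.intExtDer_chainForm m hq, C.chainForm_direction _ hq,
      mul_zero, zero_sub, neg_inj] at hcartan
    exact (mul_eq_zero.1 hcartan).resolve_left (C.fderiv_time_ne_zero q hq)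

lemma exists_chainForm_apply_ne_zero (C : IsChainOn U N Δ Y h z) {m k : ℕ} (hk : k + m + 2 = n)
    (hq : q ∈ N) : ∃ X ∈ derivedFlag U Δ k, chainForm Y h z m q (X q) ≠ 0 := by
  by_contra! hzero
  induction m generalizing k with
  | zero =>
    refine C.chainForm_zero_ne_zero q hq (ContinuousLinearMap.ext fun v => ?_)
    refine apply_eq_zero_of_mem_evalSpan hzero ?_
    rw [show k = n - 2 by lia, C.evalSpan_derivedFlag_eq_top hq]
    trivial
  | succ m ih =>
    have hann := C.chainForm_mem_annihilatorOn (m := m) (k := k) (by lia)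
    refine ih (k := k + 1) (by lia) (apply_eq_zero_of_mem_derivedFlag_succ (C.subset hq)
      (fun X hX => hann.2 X hX q hq) fun X hX X' hX' => ?_)
    refine apply_lieBracket_eq_zero C.isOpen hann.1 (C.contDiffOn_of_mem_derivedFlag hX)
      (C.contDiffOn_of_mem_derivedFlag hX') (hann.2 X hX) (hann.2 X' hX') hq ?_
    rw [C.intExtDer_chainForm m hq, hzero X hX, hzero X' hX', mul_zero, mul_zero, sub_zero]

lemma finrank_inf_ker_chainForm_lt (C : IsChainOn U N Δ Y h z) {m k : ℕ} (hk : k + m + 2 = n)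
    (hq : q ∈ N) :
    finrank ℝ ↥(evalSpan (derivedFlag U Δ k) q ⊓ LinearMap.ker (chainForm Y h z m q).toLinearMap) <
      2 + k := by
  rw [← C.finrank_derivedFlag k (by lia) q hq]
  refine Submodule.finrank_lt_finrank_of_lt (inf_lt_left.2 fun hle => ?_)
  obtain ⟨X, hX, hne⟩ := C.exists_chainForm_apply_ne_zero hk hq
  exact hne (hle (apply_mem_evalSpan hX q))

lemma mem_evalSpan_derivedFlag (C : IsChainOn U N Δ Y h z) (hq : q ∈ N) {j : ℕ} (hj : j + 2 ≤ n)
    (hv : ∀ i < j, chainForm Y h z i q v = 0) :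
    v ∈ evalSpan (derivedFlag U Δ (n - 2 - j)) q := by
  induction j with
  | zero => exact C.evalSpan_derivedFlag_eq_top hq ▸ Submodule.mem_top
  | succ j ih =>
    have hle : evalSpan (derivedFlag U Δ (n - 2 - (j + 1))) q ≤
        evalSpan (derivedFlag U Δ (n - 2 - j)) q ⊓
          LinearMap.ker (chainForm Y h z j q).toLinearMap :=
      le_inf (evalSpan_mono (derivedFlag_mono (by lia)) q) fun w hw =>
        apply_eq_zero_of_mem_evalSpan
          (fun X hX => (C.chainForm_mem_annihilatorOn (by lia)).2 X hX q hq) hw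
    have hlt := C.finrank_inf_ker_chainForm_lt (m := j) (k := n - 2 - j) (by lia) hq
    have hfinrank := C.finrank_derivedFlag (n - 2 - (j + 1)) (by lia) q hq
    rw [Submodule.eq_of_le_of_finrank_le hle (by lia)]
    exact ⟨ih (by lia) fun i hi => hv i (by lia), hv j (by lia)⟩

lemma eq_zero_of_chainForm_eq_zero (C : IsChainOn U N Δ Y h z) (hq : q ∈ N)
    (hv : ∀ m, m + 2 ≤ n → chainForm Y h z m q v = 0) (hhv : fderiv ℝ h q v = 0) : v = 0 := by
  have hn := C.two_le
  have hvΔ : v ∈ evalSpan (derivedFlag U Δ 0) q := by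
    simpa using C.mem_evalSpan_derivedFlag hq (j := n - 2) (by lia) fun i hi => hv i (by lia)
  have hYq : Y q ≠ 0 := fun h => C.fderiv_time_ne_zero q hq (by rw [h, map_zero])
  have hle : (ℝ ∙ Y q) ≤ evalSpan (derivedFlag U Δ 0) q ⊓
      LinearMap.ker (chainForm Y h z (n - 2) q).toLinearMap :=
    (Submodule.span_singleton_le_iff_mem _ _).2
      ⟨apply_mem_evalSpan (subset_derivedFlag 0 C.mem) q, C.chainForm_direction _ hq⟩
  have hlt := C.finrank_inf_ker_chainForm_lt (m := n - 2) (k := 0) (by lia) hq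
  have hspan := Submodule.eq_of_le_of_finrank_le hle (by rw [finrank_span_singleton hYq]; lia)
  obtain ⟨c, rfl⟩ : ∃ c : ℝ, c • Y q = v :=
    Submodule.mem_span_singleton.1 (hspan ▸ ⟨hvΔ, hv _ (by lia)⟩)
  rw [map_smul, smul_eq_mul] at hhv
  rw [(mul_eq_zero.1 hhv).resolve_right (C.fderiv_time_ne_zero q hq), zero_smul]

lemma eq_zero_of_fderiv_chainCoord_eq_zero (C : IsChainOn U N Δ Y h z) (hq : q ∈ N)
    (hv : ∀ m, m + 2 ≤ n → fderiv ℝ (chainCoord Y h z m) q v = 0) (hhv : fderiv ℝ h q v = 0) :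
    v = 0 :=
  C.eq_zero_of_chainForm_eq_zero hq
    (fun m hm => by rw [chainForm_apply, hv m hm, hhv, mul_zero, sub_zero]) hhv

lemma eq_zero_of_mem_evalSpan (C : IsChainOn U N Δ Y h z) (hq : q ∈ N) (hvΔ : v ∈ evalSpan Δ q)
    (hv : fderiv ℝ (chainCoord Y h z (n - 2)) q v = 0) (hhv : fderiv ℝ h q v = 0) : v = 0 := by
  refine C.eq_zero_of_chainForm_eq_zero hq (fun m hm => ?_) hhv
  rcases Nat.lt_or_ge (m + 2) n with hlt | hge
  · exact apply_eq_zero_of_mem_evalSpan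
      (fun X hX => (C.chainForm_mem_annihilatorOn (k := 0) (by lia)).2 X hX q hq) hvΔ
  · rw [show m = n - 2 by lia, chainForm_apply, hv, hhv, mul_zero, sub_zero]

end IsChainOn

end Chain

/-! ### The drift condition in terms of the chain -/

section Drift

open scoped ContDiff Topology

variable {n : ℕ} {U N : Set (Fin n → ℝ)} {Δ : Set (VF n)} {Y f : VF n} {h z : (Fin n → ℝ) → ℝ}
  {q v w : Fin n → ℝ} {i j k : ℕ}

lemma mem_span_of_forall_apply_eq_zero {m : ℕ} {ξ : Fin m → Covector n} {ζ : Covector n}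
    (h : ∀ w, (∀ j, ξ j w = 0) → ζ w = 0) : ζ ∈ Submodule.span ℝ (Set.range ξ) := by
  have hker : ⨅ j, LinearMap.ker (ξ j).toLinearMap ≤ LinearMap.ker ζ.toLinearMap := fun w hw =>
    h w fun j => (Submodule.mem_iInf _).1 hw j
  have hmap := Submodule.mem_map_of_mem (f := (LinearMap.toContinuousLinearMap (𝕜 := ℝ)
    (E := Fin n → ℝ) (F' := ℝ)).toLinearMap) (mem_span_of_iInf_ker_le_ker hker)
  rwa [Submodule.map_span, ← Set.range_comp] at hmap

namespace IsChainOn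

lemma exists_mem_annihilatorOn_eventuallyEq (C : IsChainOn U N Δ Y h z) (hq : q ∈ N)
    (hjk : k + j + 3 ≤ n) :
    ∃ ρ ∈ annihilatorOn U (derivedFlag U Δ k), ρ =ᶠ[𝓝 q] chainForm Y h z j := by
  obtain ⟨χ, hsmooth, hzero, r, hr, -, hone⟩ :=
    exists_contDiff_cutoff_smul C.isOpen (C.contDiffOn_chainForm j) hq
  refine ⟨fun x => χ x • chainForm Y h z j x, ⟨hsmooth.contDiffOn, fun X hX x _ => ?_⟩, ?_⟩
  · by_cases hxN : x ∈ N
    · rw [smul_apply, (C.chainForm_mem_annihilatorOn hjk).2 X hX x hxN, smul_zero]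
    · rw [smul_apply, hzero x hxN, zero_smul]
  · filter_upwards [Metric.ball_mem_nhds q hr] with x hx
    rw [hone x hx, one_smul]

lemma intExtDer_chainForm_eq_zero (C : IsChainOn U N Δ Y h z) (hq : q ∈ N)
    (hv : fderiv ℝ (chainCoord Y h z (j + 1)) q v = 0) (hhv : fderiv ℝ h q v = 0) :
    intExtDer (chainForm Y h z j) q v w = 0 := by
  rw [C.intExtDer_chainForm j hq, chainForm_apply (j + 1) q v, hv, hhv]
  ring

lemma mem_evalSpan_of_chainForm_eq_zero (C : IsChainOn U N Δ Y h z) (hq : q ∈ N)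
    (hik : k + i + 3 = n) (hv : ∀ j < i + 1, chainForm Y h z j q v = 0) :
    v ∈ evalSpan (derivedFlag U Δ k) q := by
  rw [show k = n - 2 - (i + 1) by lia]
  exact C.mem_evalSpan_derivedFlag hq (by lia) hv

lemma mem_evalSpan_of_fderiv_chainCoord_eq_zero (C : IsChainOn U N Δ Y h z) (hq : q ∈ N)
    (hik : k + i + 3 = n) (hv : ∀ m ≤ i + 1, fderiv ℝ (chainCoord Y h z m) q v = 0)
    (hhv : fderiv ℝ h q v = 0) : v ∈ evalSpan (derivedFlag U Δ k) q :=
  C.mem_evalSpan_of_chainForm_eq_zero hq hik fun m hm => by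
    rw [chainForm_apply, hv m (by lia), hhv, mul_zero, sub_zero]

/- The value `u` of the bracket of sections of `G_k` through `v` and `w` lies in `G_k` again, since
`η_j(u) = -dη_j(v, w) = 0` for all `j ≤ i`. -/
lemma intExtDer_eq_zero_of_mem_annihilatorOn (C : IsChainOn U N Δ Y h z) (hq : q ∈ N)
    (hik : k + i + 3 = n) (hv : ∀ m ≤ i + 1, fderiv ℝ (chainCoord Y h z m) q v = 0)
    (hhv : fderiv ℝ h q v = 0) (hw : ∀ j < i + 1, chainForm Y h z j q w = 0) {ρ : OneForm n}
    (hρ : ρ ∈ annihilatorOn U (derivedFlag U Δ k)) : intExtDer ρ q v w = 0 := by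
  obtain ⟨u, -, hvw⟩ := exists_mem_evalSpan_intExtDer_eq_neg C.isOpen_ambient C.contDiffOn
    C.zero_mem (C.mem_evalSpan_of_fderiv_chainCoord_eq_zero hq hik hv hhv)
    (C.mem_evalSpan_of_chainForm_eq_zero hq hik hw)
  have hu : u ∈ evalSpan (derivedFlag U Δ k) q := by
    refine C.mem_evalSpan_of_chainForm_eq_zero hq hik fun j hj => neg_eq_zero.1 ?_
    rw [← hvw N C.subset C.isOpen hq _ (C.chainForm_mem_annihilatorOn (by lia)),
      C.intExtDer_chainForm_eq_zero hq (hv (j + 1) (by lia)) hhv]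
  have hqU := C.subset hq
  rw [hvw U subset_rfl C.isOpen_ambient hqU ρ hρ,
    apply_eq_zero_of_mem_evalSpan (fun X hX => hρ.2 X hX q hqU) hu, neg_zero]

lemma mem_assocOf (C : IsChainOn U N Δ Y h z) (hq : q ∈ N) (hik : k + i + 3 = n)
    (hv : ∀ m ≤ i + 1, fderiv ℝ (chainCoord Y h z m) q v = 0) (hhv : fderiv ℝ h q v = 0) :
    v ∈ assocOf (annihilatorOn U (derivedFlag U Δ k)) q := by
  intro ρ hρ
  refine ⟨apply_eq_zero_of_mem_evalSpan (fun X hX => hρ.2 X hX q (C.subset hq))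
    (C.mem_evalSpan_of_fderiv_chainCoord_eq_zero hq hik hv hhv), ?_⟩
  have hspan : intExtDer ρ q v ∈
      Submodule.span ℝ (Set.range fun j : Fin (i + 1) => chainForm Y h z j q) :=
    mem_span_of_forall_apply_eq_zero fun w hw =>
      C.intExtDer_eq_zero_of_mem_annihilatorOn hq hik hv hhv (fun j hj => hw ⟨j, hj⟩) hρ
  refine Submodule.span_mono ?_ hspan
  rintro _ ⟨j, rfl⟩
  obtain ⟨σ, hσ, heq⟩ := C.exists_mem_annihilatorOn_eventuallyEq hq (j := j) (k := k) (by lia)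
  exact ⟨σ, hσ, heq.eq_of_nhds.symm⟩

/- Cartan's formula `d(η_i(f)) = L_f η_i - ι_f dη_i`: the first term vanishes on the associated
space, the second is a combination of `dh` and `dz_{i+1}`. -/
lemma fderiv_chainForm_drift_eq_zero (C : IsChainOn U N Δ Y h z) (hf : ContDiffOn ℝ ∞ f U)
    (hq : q ∈ N) (hik : k + i + 3 = n)
    (hdrift : ∀ ρ ∈ annihilatorOn U (derivedFlag U Δ k),
      lieDerOneForm f ρ q ∈ retractOf (annihilatorOn U (derivedFlag U Δ k)) q)
    (hv : ∀ m ≤ i + 1, fderiv ℝ (chainCoord Y h z m) q v = 0) (hhv : fderiv ℝ h q v = 0) :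
    fderiv ℝ (fun x => chainForm Y h z i x (f x)) q v = 0 := by
  obtain ⟨ρ, hρ, heq⟩ := C.exists_mem_annihilatorOn_eventuallyEq hq (j := i) (k := k) (by lia)
  have hlie := hdrift ρ hρ v (C.mem_assocOf hq hik hv hhv)
  have hclosed := C.intExtDer_chainForm_eq_zero (w := f q) hq (hv (i + 1) le_rfl) hhv
  have hprod := (differentiableAt_of_contDiffOn_isOpen (C.contDiffOn_chainForm i) C.isOpen
    hq).hasFDerivAt.clm_apply
      (differentiableAt_of_contDiffOn_isOpen (hf.mono C.subset) C.isOpen hq).hasFDerivAt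
  rw [lieDerOneForm, heq.fderiv_eq, heq.eq_of_nhds, add_apply,
    ContinuousLinearMap.comp_apply] at hlie
  rw [intExtDer_apply] at hclosed
  rw [hprod.fderiv, add_apply, ContinuousLinearMap.comp_apply, ContinuousLinearMap.flip_apply]
  linear_combination hlie + hclosed

end IsChainOn

end Drift

/-! ### The triangular form -/

section TriangularForm

open scoped ContDiff

variable {n : ℕ} {U N V : Set (Fin n → ℝ)} {Δ : Set (VF n)} {Y f g₁ g₂ : VF n}
  {h z : (Fin n → ℝ) → ℝ} {c p q v y y' : Fin n → ℝ} {i m : ℕ} {r : ℝ}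

/-- Condition (2) of the main theorem for a general distribution `Δ`: the Lie derivatives along
`f` of the 1-forms annihilating `G_k` lie in the retracting space of `(G_k)^⊥`. -/
def IsDriftCompatibleOn (U N : Set (Fin n → ℝ)) (Δ : Set (VF n)) (f : VF n) : Prop :=
  ∀ k : ℕ, 1 ≤ k → k + 3 ≤ n → ∀ q ∈ N, ∀ ρ ∈ annihilatorOn U (derivedFlag U Δ k),
    lieDerOneForm f ρ q ∈ retractOf (annihilatorOn U (derivedFlag U Δ k)) q

/-- The coordinate map `x ↦ (z₀, …, z_{n-2}, h)`. -/
noncomputable def chainMap (Y : VF n) (h z : (Fin n → ℝ) → ℝ) : VF n :=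
  fun x j => if j.1 + 2 ≤ n then chainCoord Y h z j.1 x else h x

lemma chainMap_apply_mk (x : Fin n → ℝ) (hm : m + 2 ≤ n) :
    chainMap Y h z x ⟨m, by lia⟩ = chainCoord Y h z m x :=
  if_pos hm

/-- Keeps the coordinates `0, …, i + 1` and `n - 1` of `y` (0-based), the arguments allowed for the
`i`-th drift component of the triangular form, and replaces the others by those of `c`. -/
noncomputable def freezeAbove (c : Fin n → ℝ) (i : ℕ) (y : Fin n → ℝ) : Fin n → ℝ :=
  fun j => if j.1 ≤ i + 1 ∨ j.1 + 1 = n then y j else c j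

lemma freezeAbove_apply_of_mem {j : Fin n} (hj : j.1 ≤ i + 1 ∨ j.1 + 1 = n) :
    freezeAbove c i y j = y j :=
  if_pos hj

lemma freezeAbove_eq_self (hi : i + 3 = n) : freezeAbove c i y = y :=
  funext fun j => freezeAbove_apply_of_mem (by lia)

lemma freezeAbove_congr (hyy' : ∀ j : Fin n, (j.1 ≤ i + 1 ∨ j.1 + 1 = n) → y j = y' j) :
    freezeAbove c i y = freezeAbove c i y' := by
  ext j
  unfold freezeAbove
  split_ifs with hj
  exacts [hyy' j hj, rfl]

lemma freezeAbove_mem_ball (hy : y ∈ Metric.ball c r) : freezeAbove c i y ∈ Metric.ball c r := by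
  have hr : 0 < r := Metric.pos_of_mem_ball hy
  rw [Metric.mem_ball, dist_pi_lt_iff hr] at hy ⊢
  intro j
  unfold freezeAbove
  split_ifs
  exacts [hy j, by rwa [dist_self]]

lemma contDiff_freezeAbove (c : Fin n → ℝ) (i : ℕ) : ContDiff ℝ ∞ (freezeAbove c i) := by
  refine contDiff_pi.2 fun j => ?_
  unfold freezeAbove
  split_ifs
  exacts [contDiff_apply ℝ ℝ j, contDiff_const]

lemma evalSpan_spanOn_pair (hq : q ∈ U) :
    evalSpan (spanOn U {g₁, g₂}) q = Submodule.span ℝ {g₁ q, g₂ q} := by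
  refine le_antisymm (Submodule.span_le.2 ?_) (Submodule.span_le.2 ?_)
  · rintro w ⟨X, ⟨m, c, Z, -, hZ, hX⟩, rfl⟩
    rw [hX q hq]
    refine Submodule.sum_mem _ fun i _ => Submodule.smul_mem _ _ (Submodule.subset_span ?_)
    exact (hZ i).imp (congrFun · q) (congrFun · q)
  · rintro w (rfl | rfl)
    · exact apply_mem_evalSpan (subset_spanOn U _ (Or.inl rfl)) q
    · exact apply_mem_evalSpan (subset_spanOn U _ (Or.inr rfl)) q

lemma linearIndependent_pair_of_finrank_evalSpan (hq : q ∈ U)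
    (hrank : Module.finrank ℝ (evalSpan (spanOn U {g₁, g₂}) q) = 2) :
    LinearIndependent ℝ ![g₁ q, g₂ q] := by
  rw [linearIndependent_iff_card_eq_finrank_span, Matrix.range_cons_cons_empty, Set.finrank,
    ← evalSpan_spanOn_pair hq, hrank, Fintype.card_fin]

/- The feedback solves `θ₀(ẋ) = v₀`, `θ₁(ẋ) = v₁` for the inputs by Cramer's rule. -/
lemma exists_feedback_of_det_ne_zero {θ₀ θ₁ : OneForm n} (hθ₀ : ContDiffOn ℝ ∞ θ₀ V)
    (hθ₁ : ContDiffOn ℝ ∞ θ₁ V) (hf : ContDiffOn ℝ ∞ f V) (hg₁ : ContDiffOn ℝ ∞ g₁ V)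
    (hg₂ : ContDiffOn ℝ ∞ g₂ V)
    (hdet : ∀ x ∈ V, θ₀ x (g₁ x) * θ₁ x (g₂ x) - θ₀ x (g₂ x) * θ₁ x (g₁ x) ≠ 0) :
    ∃ (α : (Fin n → ℝ) → Fin 2 → ℝ) (β : (Fin n → ℝ) → Fin 2 → Fin 2 → ℝ),
      (∀ i, ContDiffOn ℝ ∞ (fun x => α x i) V) ∧ (∀ i j, ContDiffOn ℝ ∞ (fun x => β x i j) V) ∧
      (∀ x ∈ V, β x 0 0 * β x 1 1 - β x 0 1 * β x 1 0 ≠ 0) ∧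
      ∀ x ∈ V, ∀ v : Fin 2 → ℝ, ∀ w : Fin n → ℝ,
        w = f x + (α x 0 + β x 0 0 * v 0 + β x 0 1 * v 1) • g₁ x
          + (α x 1 + β x 1 0 * v 0 + β x 1 1 * v 1) • g₂ x →
        θ₀ x w = v 0 ∧ θ₁ x w = v 1 := by
  set d : (Fin n → ℝ) → ℝ := fun x => θ₀ x (g₁ x) * θ₁ x (g₂ x) - θ₀ x (g₂ x) * θ₁ x (g₁ x) with hd
  have hd_smooth : ContDiffOn ℝ ∞ d V :=
    ((hθ₀.clm_apply hg₁).mul (hθ₁.clm_apply hg₂)).sub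
      ((hθ₀.clm_apply hg₂).mul (hθ₁.clm_apply hg₁))
  let β : (Fin n → ℝ) → Fin 2 → Fin 2 → ℝ := fun x =>
    ![![θ₁ x (g₂ x) / d x, -θ₀ x (g₂ x) / d x], ![-θ₁ x (g₁ x) / d x, θ₀ x (g₁ x) / d x]]
  have hβ : ∀ i j, ContDiffOn ℝ ∞ (fun x => β x i j) V := by
    simp only [Fin.forall_fin_two]
    exact ⟨⟨(hθ₁.clm_apply hg₂).div hd_smooth hdet, (hθ₀.clm_apply hg₂).neg.div hd_smooth hdet⟩,
      (hθ₁.clm_apply hg₁).neg.div hd_smooth hdet, (hθ₀.clm_apply hg₁).div hd_smooth hdet⟩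
  refine ⟨fun x i => -(β x i 0 * θ₀ x (f x) + β x i 1 * θ₁ x (f x)), β,
    fun i => (((hβ i 0).mul (hθ₀.clm_apply hf)).add ((hβ i 1).mul (hθ₁.clm_apply hf))).neg, hβ,
    fun x hx => ?_, ?_⟩
  · have hdetβ : β x 0 0 * β x 1 1 - β x 0 1 * β x 1 0 = 1 / d x := by
      have hdx : d x ≠ 0 := hdet x hx
      simp only [β, Matrix.cons_val_zero, Matrix.cons_val_one]
      field_simp
      simp only [hd]
      ring
    exact hdetβ ▸ one_div_ne_zero (hdet x hx)
  · rintro x hx v w rfl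
    have hdx : d x ≠ 0 := hdet x hx
    simp only [β, Matrix.cons_val_zero, Matrix.cons_val_one, map_add, map_smul, smul_eq_mul]
    constructor <;> field_simp <;> simp only [hd] <;> ring

namespace IsChainOn

lemma contDiffOn_chainMap (C : IsChainOn U N Δ Y h z) : ContDiffOn ℝ ∞ (chainMap Y h z) N := by
  refine contDiffOn_pi.2 fun j => ?_
  unfold chainMap
  split_ifs
  exacts [C.contDiffOn_chainCoord _, C.contDiffOn_time]

lemma differentiableAt_chainMap (C : IsChainOn U N Δ Y h z) (hq : q ∈ N) :
    DifferentiableAt ℝ (chainMap Y h z) q :=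
  differentiableAt_of_contDiffOn_isOpen C.contDiffOn_chainMap C.isOpen hq

lemma fderiv_chainMap_apply (C : IsChainOn U N Δ Y h z) (hq : q ∈ N) (v : Fin n → ℝ) (j : Fin n) :
    fderiv ℝ (chainMap Y h z) q v j =
      if j.1 + 2 ≤ n then fderiv ℝ (chainCoord Y h z j.1) q v else fderiv ℝ h q v := by
  have hj := hasFDerivAt_pi'.1 (C.differentiableAt_chainMap hq).hasFDerivAt j
  refine (DFunLike.congr_fun hj.fderiv v).symm.trans ?_
  unfold chainMap
  split_ifs <;> rfl

lemma fderiv_chainCoord_eq (C : IsChainOn U N Δ Y h z) (hq : q ∈ N) (hm : m + 2 ≤ n) :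
    fderiv ℝ (chainCoord Y h z m) q v = fderiv ℝ (chainMap Y h z) q v ⟨m, by lia⟩ := by
  rw [C.fderiv_chainMap_apply hq, if_pos hm]

lemma fderiv_time_eq (C : IsChainOn U N Δ Y h z) (hq : q ∈ N) {j : Fin n} (hj : j.1 + 1 = n) :
    fderiv ℝ h q v = fderiv ℝ (chainMap Y h z) q v j := by
  rw [C.fderiv_chainMap_apply hq, if_neg (by lia)]

lemma injective_fderiv_chainMap (C : IsChainOn U N Δ Y h z) (hq : q ∈ N) :
    Function.Injective (fderiv ℝ (chainMap Y h z) q).toLinearMap := by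
  refine (injective_iff_map_eq_zero _).2 fun v hv => ?_
  have hcoord : ∀ j, fderiv ℝ (chainMap Y h z) q v j = 0 := congrFun hv
  have := C.two_le
  refine C.eq_zero_of_fderiv_chainCoord_eq_zero hq (fun m hm => ?_) ?_
  · rw [C.fderiv_chainCoord_eq hq hm, hcoord]
  · rw [C.fderiv_time_eq hq (j := ⟨n - 1, by lia⟩) (by simp only; lia), hcoord]

lemma exists_chart (C : IsChainOn U N Δ Y h z) (hp : p ∈ N) :
    ∃ e : OpenPartialHomeomorph (Fin n → ℝ) (Fin n → ℝ), p ∈ e.source ∧ e.source ⊆ N ∧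
      ⇑e = chainMap Y h z ∧ ContDiffOn ℝ ∞ e.symm e.target ∧
      ∃ r, e.target = Metric.ball (e p) r := by
  let L := (LinearEquiv.ofInjectiveEndo _ (C.injective_fderiv_chainMap hp)).toContinuousLinearEquiv
  have hL : (L : (Fin n → ℝ) →L[ℝ] (Fin n → ℝ)) = fderiv ℝ (chainMap Y h z) p := rfl
  obtain ⟨e, hpe, heN, he, hsymm⟩ := exists_openPartialHomeomorph_contDiffOn_symm C.isOpen
    C.contDiffOn_chainMap hp (hL ▸ (C.differentiableAt_chainMap hp).hasFDerivAt)
  obtain ⟨r, hr, hrt⟩ := Metric.isOpen_iff.1 e.open_target _ (e.map_source hpe)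
  let e' := (e.symm.restrOpen (Metric.ball (e p) r) Metric.isOpen_ball).symm
  have htarget : e'.target = Metric.ball (e p) r := Set.inter_eq_right.2 hrt
  have hsource : e'.source ⊆ e.source := fun x hx => hx.1
  refine ⟨e', ?_, hsource.trans heN, he, hsymm.mono (htarget ▸ hrt), r, htarget⟩
  have hmem := e'.map_target (htarget ▸ Metric.mem_ball_self hr)
  rwa [show e'.symm (e p) = p from e.left_inv hpe] at hmem

lemma fderiv_drift_comp_symm_eq_zero (C : IsChainOn U N Δ Y h z) (hf : ContDiffOn ℝ ∞ f U)
    (hdrift : IsDriftCompatibleOn U N Δ f)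
    {e : OpenPartialHomeomorph (Fin n → ℝ) (Fin n → ℝ)} (heN : e.source ⊆ N)
    (he : ⇑e = chainMap Y h z) (hsymm : ContDiffOn ℝ ∞ e.symm e.target) (hi : i + 3 < n)
    (hy : y ∈ e.target) (hv : ∀ j : Fin n, (j.1 ≤ i + 1 ∨ j.1 + 1 = n) → v j = 0) :
    fderiv ℝ (fun y => chainForm Y h z i (e.symm y) (f (e.symm y))) y v = 0 := by
  have hq : e.symm y ∈ N := heN (e.map_target hy)
  have hs := differentiableAt_of_contDiffOn_isOpen hsymm e.open_target hy
  have hform := differentiableAt_of_contDiffOn_isOpen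
    ((C.contDiffOn_chainForm i).clm_apply (hf.mono C.subset)) C.isOpen hq
  have hright : fderiv ℝ (chainMap Y h z) (e.symm y) (fderiv ℝ e.symm y v) = v := by
    have hcomp := (C.differentiableAt_chainMap hq).hasFDerivAt.comp y hs.hasFDerivAt
    rw [← he] at hcomp ⊢
    refine DFunLike.congr_fun (hcomp.unique ((hasFDerivAt_id y).congr_of_eventuallyEq ?_)) v
    exact e.eventually_right_inverse hy
  rw [show (fun y => chainForm Y h z i (e.symm y) (f (e.symm y))) =
    (fun x => chainForm Y h z i x (f x)) ∘ e.symm from rfl, fderiv_comp y hform hs,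
    ContinuousLinearMap.comp_apply]
  refine C.fderiv_chainForm_drift_eq_zero hf hq (k := n - 3 - i) (by lia)
    (hdrift _ (by lia) (by lia) _ hq) (fun m hm => ?_) ?_
  · rw [C.fderiv_chainCoord_eq hq (by lia), hright]
    exact hv _ (Or.inl hm)
  · rw [C.fderiv_time_eq hq (j := ⟨n - 1, by lia⟩) (by simp only; lia), hright]
    exact hv _ (Or.inr (by simp only; lia))

lemma drift_symm_freezeAbove (C : IsChainOn U N Δ Y h z) (hf : ContDiffOn ℝ ∞ f U)
    (hdrift : IsDriftCompatibleOn U N Δ f)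
    {e : OpenPartialHomeomorph (Fin n → ℝ) (Fin n → ℝ)} (heN : e.source ⊆ N)
    (he : ⇑e = chainMap Y h z) (hsymm : ContDiffOn ℝ ∞ e.symm e.target)
    (hball : e.target = Metric.ball c r) (hi : i + 3 ≤ n) (hy : y ∈ e.target) :
    chainForm Y h z i (e.symm (freezeAbove c i y)) (f (e.symm (freezeAbove c i y))) =
      chainForm Y h z i (e.symm y) (f (e.symm y)) := by
  obtain hi | hi := hi.eq_or_lt
  · rw [freezeAbove_eq_self hi]
  have hsmooth : ContDiffOn ℝ ∞ (fun y => chainForm Y h z i (e.symm y) (f (e.symm y))) e.target :=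
    ((C.contDiffOn_chainForm i).clm_apply (hf.mono C.subset)).comp hsymm
      fun y hy => heN (e.map_target hy)
  have hfreeze : freezeAbove c i y ∈ e.target := hball ▸ freezeAbove_mem_ball (hball ▸ hy)
  obtain ⟨y', hy', hmvt⟩ := domain_mvt (fun y hy => (differentiableAt_of_contDiffOn_isOpen hsmooth
    e.open_target hy).hasFDerivAt.hasFDerivWithinAt) (hball ▸ convex_ball c r) hy hfreeze
  have hy'_mem : y' ∈ e.target := (hball ▸ convex_ball c r).segment_subset hy hfreeze hy'
  rw [C.fderiv_drift_comp_symm_eq_zero hf hdrift heN he hsymm hi hy'_mem fun j hj => ?_] at hmvt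
  · exact sub_eq_zero.1 hmvt
  · rw [Pi.sub_apply, freezeAbove_apply_of_mem hj, sub_self]

lemma det_ne_zero (C : IsChainOn U N (spanOn U {g₁, g₂}) Y h z) (hq : q ∈ N) :
    fderiv ℝ h q (g₁ q) * fderiv ℝ (chainCoord Y h z (n - 2)) q (g₂ q) -
      fderiv ℝ h q (g₂ q) * fderiv ℝ (chainCoord Y h z (n - 2)) q (g₁ q) ≠ 0 := by
  intro hdet
  have hpair := LinearIndependent.pair_iff.1 <| linearIndependent_pair_of_finrank_evalSpan
    (C.subset hq) (C.finrank_derivedFlag 0 C.two_le q hq)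
  have hmem₁ : g₁ q ∈ evalSpan (spanOn U {g₁, g₂}) q :=
    apply_mem_evalSpan (subset_spanOn U _ (Or.inl rfl)) q
  have hmem₂ : g₂ q ∈ evalSpan (spanOn U {g₁, g₂}) q :=
    apply_mem_evalSpan (subset_spanOn U _ (Or.inr rfl)) q
  set D := fderiv ℝ (chainCoord Y h z (n - 2)) q
  set E := fderiv ℝ h q
  have hcomb : ∀ a b : ℝ, a * D (g₁ q) + b * D (g₂ q) = 0 → a * E (g₁ q) + b * E (g₂ q) = 0 →
      a = 0 ∧ b = 0 := fun a b hDab hEab => by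
    refine hpair a b (C.eq_zero_of_mem_evalSpan hq (Submodule.add_mem _
      (Submodule.smul_mem _ _ hmem₁) (Submodule.smul_mem _ _ hmem₂)) ?_ ?_)
    · rwa [map_add, map_smul, map_smul]
    · rwa [map_add, map_smul, map_smul]
  have hDzero := hcomb (D (g₂ q)) (-D (g₁ q)) (by ring) (by linarith)
  have hEzero := hcomb (E (g₂ q)) (-E (g₁ q)) (by linarith) (by ring)
  exact one_ne_zero (hcomb 1 0 (by linarith) (by linarith)).1

lemma chainForm_apply_add_smul (C : IsChainOn U N (spanOn U {g₁, g₂}) Y h z) (hq : q ∈ N)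
    (hi : i + 3 ≤ n) (w : Fin n → ℝ) (a b : ℝ) :
    chainForm Y h z i q (w + a • g₁ q + b • g₂ q) = chainForm Y h z i q w := by
  have hann := (C.chainForm_mem_annihilatorOn (k := 0) (m := i) (by lia)).2
  rw [map_add, map_add, map_smul, map_smul, hann g₁ (subset_spanOn U _ (Or.inl rfl)) q hq,
    hann g₂ (subset_spanOn U _ (Or.inr rfl)) q hq, smul_zero, smul_zero, add_zero,
    add_zero]

lemma fderiv_chainMap_eq_triRHS (C : IsChainOn U N Δ Y h z) (hq : q ∈ N)
    {Φ : ℕ → (Fin n → ℝ) → ℝ} {w : Fin n → ℝ} {v : Fin 2 → ℝ}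
    (htime : fderiv ℝ h q w = v 0) (hlast : fderiv ℝ (chainCoord Y h z (n - 2)) q w = v 1)
    (hΦ : ∀ i, i + 3 ≤ n → chainForm Y h z i q w = Φ i (chainMap Y h z q)) :
    fderiv ℝ (chainMap Y h z) q w = triRHS n Φ (chainMap Y h z q) v := by
  ext j
  rw [C.fderiv_chainMap_apply hq]
  unfold triRHS
  split_ifs with hj hj' hj' hj' hj'
  · rw [chainMap_apply_mk q (by lia), ← hΦ j hj', chainForm_apply, htime, sub_add_cancel]
  · rw [show j.1 = n - 2 by lia, hlast]
  · lia
  · lia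
  · lia
  · exact htime

theorem isTriangularizableAt (C : IsChainOn U N (spanOn U {g₁, g₂}) Y h z)
    (hf : ContDiffOn ℝ ∞ f U) (hg₁ : ContDiffOn ℝ ∞ g₁ U) (hg₂ : ContDiffOn ℝ ∞ g₂ U)
    (hdrift : IsDriftCompatibleOn U N (spanOn U {g₁, g₂}) f) (hp : p ∈ N) :
    IsTriangularizableAt n U f g₁ g₂ p := by
  obtain ⟨e, hpe, heN, he, hsymm, r, hball⟩ := C.exists_chart hp
  have heU := heN.trans C.subset
  obtain ⟨α, β, hα, hβ, hβdet, hfeedback⟩ := exists_feedback_of_det_ne_zero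
    (C.contDiffOn_fderiv_time.mono heN) ((C.contDiffOn_fderiv_chainCoord (n - 2)).mono heN)
    (hf.mono heU) (hg₁.mono heU) (hg₂.mono heU) fun x hx => C.det_ne_zero (heN hx)
  let Φ : ℕ → (Fin n → ℝ) → ℝ := fun i y =>
    chainForm Y h z i (e.symm (freezeAbove (e p) i y)) (f (e.symm (freezeAbove (e p) i y)))
  have hΦ : ∀ i, ContDiffOn ℝ ∞ (Φ i) e.target := fun i =>
    (((C.contDiffOn_chainForm i).clm_apply (hf.mono C.subset)).comp hsymm
      fun y hy => heN (e.map_target hy)).comp (contDiff_freezeAbove _ i).contDiffOn fun y hy =>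
        hball ▸ freezeAbove_mem_ball (hball ▸ hy)
  refine ⟨e.source, e.open_source, hpe, heU, e, e.symm, he ▸ C.contDiffOn_chainMap.mono heN,
    e.image_source_eq_target ▸ e.open_target, e.image_source_eq_target ▸ hsymm,
    fun x hx => e.left_inv hx, α, β, hα, hβ, hβdet, Φ,
    fun i _ => e.image_source_eq_target ▸ hΦ i, fun i _ y y' hyy' => ?_, fun x hx v => ?_⟩
  · simp only [Φ, freezeAbove_congr hyy']
  · obtain ⟨htime, hlast⟩ := hfeedback x hx v _ rfl
    rw [he]
    refine C.fderiv_chainMap_eq_triRHS (heN hx) htime hlast fun i hi => ?_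
    rw [C.chainForm_apply_add_smul (heN hx) hi, ← he]
    simp only [Φ]
    rw [C.drift_symm_freezeAbove hf hdrift heN he hsymm hball hi (e.map_source hx), e.left_inv hx]

end IsChainOn

end TriangularForm

noncomputable section

/-- **sufficiency in the main theorem.** If conditions 1) and 2) hold on
some open neighborhood `W ⊆ U` of `p`, then the system `ẋ = f(x) + g₁(x)u₁ + g₂(x)u₂`
is transformable into the triangular form (3) near `p`: there are a local change of
coordinates `z = φ(x)` and a regular static state feedback `u = α(x) + β(x)v` bringing
the closed-loop system to the triangular form. -/
theorem main_theorem_sufficiency {n : ℕ} (hn : 2 ≤ n) (U : Set (Fin n → ℝ)) (hU : IsOpen U)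
    (f g1 g2 : VF n)
    (hf : ContDiffOn ℝ (⊤ : ℕ∞) f U) (hg1 : ContDiffOn ℝ (⊤ : ℕ∞) g1 U) (hg2 : ContDiffOn ℝ (⊤ : ℕ∞) g2 U)
    (p : Fin n → ℝ) (hp : p ∈ U)
    (hcond : ∃ W : Set (Fin n → ℝ), IsOpen W ∧ p ∈ W ∧ W ⊆ U ∧
      MainConditionsOn n U W f g1 g2) :
    IsTriangularizableAt n U f g1 g2 p := by
  obtain ⟨W, hW, hpW, hWU, hrank, hdrift⟩ := hcond
  have hsmooth : ∀ X ∈ spanOn U {g1, g2}, ContDiffOn ℝ (⊤ : ℕ∞) X U :=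
    contDiffOn_of_mem_spanOn fun X hX => by rcases hX with rfl | rfl <;> assumption
  have hgoursat : IsGoursatOn U W (spanOn U {g1, g2}) :=
    ⟨hn, hU, hW, hWU, hsmooth, zero_mem_spanOn U _, fun k hk q hq => (hrank k hk q hq).2⟩
  have htop : evalSpan (lieFlag U (spanOn U {g1, g2}) (n - 2)) p = ⊤ := by
    refine Submodule.eq_top_of_finrank_eq ((hrank (n - 2) (by lia) p hpW).1.trans ?_)
    rw [Module.finrank_fin_fun]
    lia
  obtain ⟨N, hNW, hpN, Y, h, z, hchain⟩ := hgoursat.exists_isChainOn hpW htop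
  exact hchain.isTriangularizableAt hf hg1 hg2
    (fun k hk hkn q hq => hdrift k hk hkn q (hNW hq)) hpN

end
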